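/- arXiv:2109.03839 — 3 statements merged into one kernel-verified Lean document; each statement's English description precedes it below -/
import Mathlib

section
/- (Contraction of overdamped Langevin dynamics, Lemma 2) Let f : ℝ^d → ℝ be twice continuously differentiable with m·I ≼ ∇²f(x) ≼ L·I for all x (0 < m ≤ L). Let (x_t) and (y_t) be two solutions of the overdamped Langevin dynamics driven by the SAME standard d-dimensional Brownian motion (B_t), with square-integrable initial values x_0 = x and y_0 = y (measurable with respect to the initial σ-algebra). Then for all t ≥ 0, (E‖y_t − x_t‖²)^{1/2} ≤ (E‖y − x‖²)^{1/2} · exp(−m t). -/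
open MeasureTheory ProbabilityTheory Real
open scoped ENNReal NNReal

noncomputable section

/-- `ℝ^d` with the Euclidean structure. -/
abbrev Euc (d : ℕ) := EuclideanSpace ℝ (Fin d)

/-- The standard Gaussian measure `N(0, I_d)` on `ℝ^d`. -/
noncomputable def stdGaussian (d : ℕ) : Measure (Euc d) :=
  (Measure.pi fun _ : Fin d => gaussianReal 0 1).map (EuclideanSpace.equiv (Fin d) ℝ).symm

/-- The centered Gaussian measure on `ℝ^d` with covariance `σ2 • I_d`. -/
noncomputable def isoGaussian (d : ℕ) (σ2 : ℝ) : Measure (Euc d) :=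
  (stdGaussian d).map fun x => Real.sqrt σ2 • x

/-- `B` is a standard `d`-dimensional Brownian motion with respect to the filtration `ℱ`
under the probability measure `P`. -/
structure IsStdBrownian {d : ℕ} {Ω : Type*} {mΩ : MeasurableSpace Ω} (P : Measure Ω)
    (ℱ : Filtration ℝ mΩ) (B : ℝ → Ω → Euc d) : Prop where
  init : ∀ ω, B 0 ω = 0
  cont : ∀ ω, Continuous fun t => B t ω
  adapted : StronglyAdapted ℱ B
  incr_law : ∀ s t : ℝ, 0 ≤ s → s ≤ t →
    P.map (fun ω => B t ω - B s ω) = isoGaussian d (t - s)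
  incr_indep : ∀ s t : ℝ, 0 ≤ s → s ≤ t →
    Indep (MeasurableSpace.comap (fun ω => B t ω - B s ω) inferInstance) (ℱ s) P

/-- `X` is a (pathwise) solution of the overdamped Langevin dynamics
`dX_t = -∇f(X_t) dt + √2 dB_t`: a continuous adapted process satisfying the integral
equation `X_t = X_0 - ∫₀ᵗ ∇f(X_s) ds + √2 B_t` for all `t ≥ 0`. -/
structure IsLangevinSolution {d : ℕ} {Ω : Type*} {mΩ : MeasurableSpace Ω}
    (ℱ : Filtration ℝ mΩ) (f : Euc d → ℝ) (B : ℝ → Ω → Euc d) (X : ℝ → Ω → Euc d) : Prop where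
  cont : ∀ ω, Continuous fun t => X t ω
  adapted : StronglyAdapted ℱ X
  eqn : ∀ ω, ∀ t : ℝ, 0 ≤ t →
    X t ω = X 0 ω - (∫ s in (0:ℝ)..t, gradient f (X s ω)) + Real.sqrt 2 • B t ω

/-- The Hessian bounds `m • I ≼ ∇²f(x) ≼ L • I` for all `x`, expressed through the second
iterated Fréchet derivative: `m ‖v‖² ≤ ⟨v, ∇²f(x) v⟩ ≤ L ‖v‖²`. -/
def HessianBounds {d : ℕ} (m L : ℝ) (f : Euc d → ℝ) : Prop :=
  ∀ x v : Euc d, m * ‖v‖ ^ 2 ≤ iteratedFDeriv ℝ 2 f x ![v, v] ∧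
    iteratedFDeriv ℝ 2 f x ![v, v] ≤ L * ‖v‖ ^ 2

end

/-! Synchronous coupling: in the difference of two solutions driven by the same noise the noise
cancels, so path by path `u = y - x` is differentiable with `u' = -(F y - F x)`, even though
neither path need be. Strong monotonicity of the drift `F = ∇f`, which is the Hessian bound
integrated along a segment, gives `⟪u, u'⟫ ≤ -m ‖u‖²`, and Grönwall applied to `‖u‖²` contracts
every path. The moment bound then only uses monotonicity of the `L^p` seminorm. -/

section StrongMonotonicity

variable {V : Type*} [NormedAddCommGroup V] [NormedSpace ℝ V]

lemma mul_norm_sq_le_sub_apply_of_le_fderiv {g : V → StrongDual ℝ V} {m : ℝ}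
    (hg : Differentiable ℝ g) (hm : ∀ x v, m * ‖v‖ ^ 2 ≤ fderiv ℝ g x v v) (x y : V) :
    m * ‖y - x‖ ^ 2 ≤ (g y - g x) (y - x) := by
  set v := y - x
  have hderiv (s : ℝ) :
      HasDerivAt (fun s : ℝ ↦ g (x + s • v) v) (fderiv ℝ g (x + s • v) v v) s := by
    have hline : HasDerivAt (fun s : ℝ ↦ x + s • v) v s := by
      simpa using ((hasDerivAt_id s).smul_const v).const_add x
    simpa using ((hg _).hasFDerivAt.comp_hasDerivAt s hline).clm_apply (hasDerivAt_const s v)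
  have hmean := mul_sub_le_image_sub_of_le_deriv (fun s ↦ (hderiv s).differentiableAt)
    (fun s ↦ (hm _ _).trans_eq (hderiv s).deriv.symm) zero_le_one
  simpa [v] using hmean

variable {E : Type*} [NormedAddCommGroup E] [InnerProductSpace ℝ E]

/-- `m`-strong monotonicity of a vector field. The constant `m` may have any sign: for `m < 0` this
is the one-sided Lipschitz condition on `-F`. -/
def IsStronglyMonotone (m : ℝ) (F : E → E) : Prop :=
  ∀ x y, m * ‖y - x‖ ^ 2 ≤ inner ℝ (F y - F x) (y - x)

variable [CompleteSpace E]

lemma isStronglyMonotone_gradient_of_le_fderiv {f : E → ℝ} {m : ℝ}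
    (hf : Differentiable ℝ (fderiv ℝ f)) (hm : ∀ x v, m * ‖v‖ ^ 2 ≤ fderiv ℝ (fderiv ℝ f) x v v) :
    IsStronglyMonotone m (gradient f) := fun x y ↦ by
  simpa [inner_sub_left, inner_gradient_left] using mul_norm_sq_le_sub_apply_of_le_fderiv hf hm x y

lemma continuous_gradient {f : E → ℝ} (hf : Continuous (fderiv ℝ f)) : Continuous (gradient f) :=
  (InnerProductSpace.toDual ℝ E).symm.continuous.comp hf

lemma HessianBounds.isStronglyMonotone_gradient {d : ℕ} {f : Euc d → ℝ} {m L : ℝ}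
    (hHess : HessianBounds m L f) (hf : ContDiff ℝ 2 f) : IsStronglyMonotone m (gradient f) :=
  isStronglyMonotone_gradient_of_le_fderiv
    ((hf.fderiv_right (m := 1) (by norm_num)).differentiable one_ne_zero)
    fun x v ↦ by simpa [iteratedFDeriv_two_apply] using (hHess x v).1

end StrongMonotonicity

section Pathwise

open Set

variable {V : Type*} [NormedAddCommGroup V] [NormedSpace ℝ V]

/-- A continuous path on `[0, ∞)` solving `dx = -F(x) dt + dw` in integral form. The additive noise
`w` is an arbitrary path, so this is the pathwise content of an SDE with additive noise. -/
structure IsAdditiveNoiseSolution (F : V → V) (w x : ℝ → V) : Prop where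
  continuousOn : ContinuousOn x (Ici 0)
  eqn : ∀ t, 0 ≤ t → x t = x 0 - (∫ s in (0 : ℝ)..t, F (x s)) + w t

namespace IsAdditiveNoiseSolution

variable {F : V → V} {w x y : ℝ → V}

lemma sub_eq (hF : Continuous F) (hx : IsAdditiveNoiseSolution F w x)
    (hy : IsAdditiveNoiseSolution F w y) {t : ℝ} (ht : 0 ≤ t) :
    y t - x t = y 0 - x 0 - ∫ s in (0 : ℝ)..t, (F (y s) - F (x s)) := by
  have hint {z : ℝ → V} (hz : ContinuousOn z (Ici 0)) :
      IntervalIntegrable (fun s ↦ F (z s)) volume 0 t :=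
    (hF.comp_continuousOn (hz.mono (uIcc_of_le ht ▸ Icc_subset_Ici_self))).intervalIntegrable
  rw [hx.eqn t ht, hy.eqn t ht,
    intervalIntegral.integral_sub (hint hy.continuousOn) (hint hx.continuousOn)]
  abel

variable [CompleteSpace V]

lemma hasDerivWithinAt_sub (hF : Continuous F) (hx : IsAdditiveNoiseSolution F w x)
    (hy : IsAdditiveNoiseSolution F w y) {t : ℝ} (ht : 0 ≤ t) :
    HasDerivWithinAt (fun s ↦ y s - x s) (-(F (y t) - F (x t))) (Ici t) t := by
  have hcont : ContinuousOn (fun s ↦ F (y s) - F (x s)) (Ici 0) :=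
    (hF.comp_continuousOn hy.continuousOn).sub (hF.comp_continuousOn hx.continuousOn)
  have hcontIoi : ContinuousOn (fun s ↦ F (y s) - F (x s)) (Ioi t) :=
    hcont.mono (Ioi_subset_Ici ht)
  have hintegral : HasDerivWithinAt (fun τ ↦ ∫ s in (0 : ℝ)..τ, (F (y s) - F (x s)))
      (F (y t) - F (x t)) (Ici t) t :=
    intervalIntegral.integral_hasDerivWithinAt_right
      (hcont.mono (uIcc_of_le ht ▸ Icc_subset_Ici_self)).intervalIntegrable
      (hcontIoi.stronglyMeasurableAtFilter_nhdsWithin measurableSet_Ioi t)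
      ((hcont t ht).mono (Ioi_subset_Ici ht))
  exact (hintegral.const_sub (y 0 - x 0)).congr
    (fun s hs ↦ hx.sub_eq hF hy (ht.trans hs)) (hx.sub_eq hF hy ht)

end IsAdditiveNoiseSolution

variable {E : Type*} [NormedAddCommGroup E] [InnerProductSpace ℝ E]

lemma norm_le_mul_exp_of_inner_deriv_right_le {u u' : ℝ → E} {K a b : ℝ}
    (hu : ContinuousOn u (Icc a b)) (hu' : ∀ t ∈ Ico a b, HasDerivWithinAt u (u' t) (Ici t) t)
    (hK : ∀ t ∈ Ico a b, inner ℝ (u t) (u' t) ≤ K * ‖u t‖ ^ 2) {t : ℝ} (ht : t ∈ Icc a b) :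
    ‖u t‖ ≤ ‖u a‖ * exp (K * (t - a)) := by
  have hsq : ‖u t‖ ^ 2 ≤ gronwallBound (‖u a‖ ^ 2) (2 * K) 0 (t - a) :=
    le_gronwallBound_of_liminf_deriv_right_le (f := fun s ↦ ‖u s‖ ^ 2) (hu.norm.pow 2)
      (fun s hs _ hr ↦ (hu' s hs).norm_sq.liminf_right_slope_le hr) le_rfl
      (fun s hs ↦ by linarith [hK s hs]) t ht
  refine le_of_sq_le_sq ?_ (by positivity)
  calc ‖u t‖ ^ 2 ≤ ‖u a‖ ^ 2 * exp (2 * K * (t - a)) := by rwa [gronwallBound_ε0] at hsq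
    _ = (‖u a‖ * exp (K * (t - a))) ^ 2 := by rw [mul_pow, ← exp_nat_mul]; ring_nf

lemma IsAdditiveNoiseSolution.norm_sub_le_mul_exp [CompleteSpace E] {F : E → E} {w x y : ℝ → E}
    {m : ℝ} (hF : Continuous F) (hmono : IsStronglyMonotone m F)
    (hx : IsAdditiveNoiseSolution F w x) (hy : IsAdditiveNoiseSolution F w y)
    {t : ℝ} (ht : 0 ≤ t) : ‖y t - x t‖ ≤ ‖y 0 - x 0‖ * exp (-m * t) := by
  have hcontract (s : ℝ) :
      inner ℝ (y s - x s) (-(F (y s) - F (x s))) ≤ -m * ‖y s - x s‖ ^ 2 := by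
    rw [inner_neg_right, real_inner_comm, neg_mul]
    exact neg_le_neg (hmono (x s) (y s))
  simpa using norm_le_mul_exp_of_inner_deriv_right_le
    ((hy.continuousOn.sub hx.continuousOn).mono Icc_subset_Ici_self)
    (fun s hs ↦ hx.hasDerivWithinAt_sub hF hy hs.1) (fun s _ ↦ hcontract s) (right_mem_Icc.2 ht)

end Pathwise

lemma IsLangevinSolution.isAdditiveNoiseSolution {d : ℕ} {Ω : Type*} {mΩ : MeasurableSpace Ω}
    {ℱ : Filtration ℝ mΩ} {f : Euc d → ℝ} {B X : ℝ → Ω → Euc d}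
    (hX : IsLangevinSolution ℱ f B X) (ω : Ω) :
    IsAdditiveNoiseSolution (gradient f) (fun t ↦ √2 • B t ω) (fun t ↦ X t ω) :=
  ⟨(hX.cont ω).continuousOn, hX.eqn ω⟩

lemma eLpNorm_two_eq_rpow_lintegral {α E : Type*} {mα : MeasurableSpace α} [NormedAddCommGroup E]
    (g : α → E) (μ : Measure α) :
    eLpNorm g 2 μ = (∫⁻ a, (‖g a‖₊ : ℝ≥0∞) ^ 2 ∂μ) ^ (1 / 2 : ℝ) := by
  simp [eLpNorm_eq_lintegral_rpow_enorm_toReal two_ne_zero ENNReal.ofNat_ne_top, enorm_eq_nnnorm]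

theorem langevin_contraction_general {E Ω : Type*} [NormedAddCommGroup E] [InnerProductSpace ℝ E]
    [CompleteSpace E] {mΩ : MeasurableSpace Ω} {P : Measure Ω} {F : E → E} {m : ℝ}
    (hF : Continuous F) (hmono : IsStronglyMonotone m F) {W X Y : ℝ → Ω → E}
    (hX : ∀ᵐ ω ∂P, IsAdditiveNoiseSolution F (fun t ↦ W t ω) (fun t ↦ X t ω))
    (hY : ∀ᵐ ω ∂P, IsAdditiveNoiseSolution F (fun t ↦ W t ω) (fun t ↦ Y t ω))
    (p : ℝ≥0∞) {t : ℝ} (ht : 0 ≤ t) :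
    eLpNorm (fun ω ↦ Y t ω - X t ω) p P ≤
      eLpNorm (fun ω ↦ Y 0 ω - X 0 ω) p P * ENNReal.ofReal (exp (-m * t)) := by
  rw [mul_comm]
  refine eLpNorm_le_mul_eLpNorm_of_ae_le_mul ?_ p
  filter_upwards [hX, hY] with ω hx hy
  exact (hx.norm_sub_le_mul_exp hF hmono hy ht).trans_eq (mul_comm _ _)

/-- **Contraction of overdamped Langevin dynamics** (Lemma 2).
If `f` is `m`-strongly convex and `L`-smooth (`0 < m ≤ L`), and `X`, `Y` are two solutions of
the overdamped Langevin dynamics driven by the *same* standard `d`-dimensional Brownian motion,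
with square-integrable initial values, then for all `t ≥ 0`,
`(E‖Y_t - X_t‖²)^{1/2} ≤ (E‖Y_0 - X_0‖²)^{1/2} · exp(-m t)`. -/
theorem langevin_contraction
    {d : ℕ} {Ω : Type*} {mΩ : MeasurableSpace Ω} {P : Measure Ω} [IsProbabilityMeasure P]
    {ℱ : Filtration ℝ mΩ} {f : Euc d → ℝ} {m L : ℝ}
    (hm : 0 < m) (hmL : m ≤ L) (hf : ContDiff ℝ 2 f) (hHess : HessianBounds m L f)
    {B X Y : ℝ → Ω → Euc d} (hB : IsStdBrownian P ℱ B)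
    (hX : IsLangevinSolution ℱ f B X) (hY : IsLangevinSolution ℱ f B Y)
    (hX0 : MemLp (X 0) 2 P) (hY0 : MemLp (Y 0) 2 P)
    {t : ℝ} (ht : 0 ≤ t) :
    (∫⁻ ω, (‖Y t ω - X t ω‖₊ : ℝ≥0∞) ^ 2 ∂P) ^ (1/2 : ℝ) ≤
      (∫⁻ ω, (‖Y 0 ω - X 0 ω‖₊ : ℝ≥0∞) ^ 2 ∂P) ^ (1/2 : ℝ) *
        ENNReal.ofReal (Real.exp (-m * t)) := by
  simpa only [eLpNorm_two_eq_rpow_lintegral] using langevin_contraction_general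
    (continuous_gradient (hf.continuous_fderiv two_ne_zero)) (hHess.isStronglyMonotone_gradient hf)
    (.of_forall hX.isAdditiveNoiseSolution) (.of_forall hY.isAdditiveNoiseSolution) 2 ht
end

section
/- (Growth bound of Langevin dynamics, Lemma 3) Let f : ℝ^d → ℝ be twice continuously differentiable with m·I ≼ ∇²f(x) ≼ L·I for all x (0 < m ≤ L), κ = L/m, and ∇f(0) = 0. Let (x_t) be a solution of the overdamped Langevin dynamics driven by a standard d-dimensional Brownian motion with square-integrable initial value x_0 = x. Then for every h with 0 ≤ h ≤ 1/(4κL): E‖x_h − x‖² ≤ 6 (d + (m/2) E‖x‖²) h. -/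
open MeasureTheory ProbabilityTheory Real
open scoped ENNReal NNReal

/-!
The Hessian bounds and `∇f(0) = 0` give `‖∇f(x)‖ ≤ L ‖x‖`, so that the displacement
`u_t = X_t - X_0` satisfies `‖u_t‖ ≤ L t ‖X_0‖ + ‖√2 B_t‖ + L ∫₀ᵗ ‖u_s‖ ds` along every path.
Integrating this over `[0, h]` with `L h ≤ 1/4` bounds `∫₀ʰ ‖u_s‖ ds`, and inserting that bound
at `t = h` controls `‖u_h‖` by `‖X_0‖`, `‖√2 B_h‖` and the time average of `‖√2 B_t‖` over
`[0, h]`. As an average appears and not a supremum, no maximal inequality is needed: squaring,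
Jensen's inequality and `E‖√2 B_t‖² = 2 d t` give `E‖u_h‖² ≤ (16/3) (d h + (L h)² E‖X_0‖²)`, and
`L² h ≤ m/4` under the restriction on the step size.
-/

section Gradient

theorem norm_le_of_abs_apply_self_le {E : Type*} [NormedAddCommGroup E] [InnerProductSpace ℝ E]
    {B : E →L[ℝ] E →L[ℝ] ℝ} {C : ℝ} (hC : 0 ≤ C) (hsymm : ∀ v w, B v w = B w v)
    (hB : ∀ v, |B v v| ≤ C * ‖v‖ ^ 2) : ‖B‖ ≤ C := by
  refine B.opNorm_le_of_unit_norm hC fun v hv ↦ (B v).opNorm_le_of_unit_norm hC fun w hw ↦ ?_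
  have polarization : 4 * B v w = B (v + w) (v + w) - B (v - w) (v - w) := by
    simp only [map_add, map_sub, add_apply, sub_apply, hsymm w v]
    ring
  have parallelogram : C * ‖v + w‖ ^ 2 + C * ‖v - w‖ ^ 2 = 4 * C := by
    have := parallelogram_law_with_norm ℝ v w
    rw [hv, hw] at this
    linear_combination C * this
  have hadd := abs_le.1 (hB (v + w))
  have hsub := abs_le.1 (hB (v - w))
  rw [Real.norm_eq_abs, abs_le]
  constructor <;> linarith

theorem continuous_gradient_of_contDiff {F : Type*} [NormedAddCommGroup F] [InnerProductSpace ℝ F]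
    [CompleteSpace F] {f : F → ℝ} (hf : ContDiff ℝ 1 f) : Continuous (gradient f) :=
  (LinearIsometryEquiv.continuous _).comp (hf.continuous_fderiv one_ne_zero)

variable {d : ℕ} {f : Euc d → ℝ} {m L : ℝ}

theorem HessianBounds.norm_fderiv_fderiv_le (hHess : HessianBounds m L f) (hL : 0 ≤ L)
    (hmL : -L ≤ m) (hf : ContDiff ℝ 2 f) (x : Euc d) : ‖fderiv ℝ (fderiv ℝ f) x‖ ≤ L := by
  refine norm_le_of_abs_apply_self_le hL (hf.contDiffAt.isSymmSndFDerivAt (by simp)) fun v ↦ ?_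
  obtain ⟨lower, upper⟩ := hHess x v
  simp only [iteratedFDeriv_two_apply, Matrix.cons_val_zero, Matrix.cons_val_one] at lower upper
  exact abs_le.2 ⟨by nlinarith [sq_nonneg ‖v‖], upper⟩

theorem HessianBounds.norm_gradient_sub_le (hHess : HessianBounds m L f) (hL : 0 ≤ L)
    (hmL : -L ≤ m) (hf : ContDiff ℝ 2 f) (x y : Euc d) :
    ‖gradient f x - gradient f y‖ ≤ L * ‖x - y‖ := by
  have hdiff : Differentiable ℝ (fderiv ℝ f) :=
    (hf.fderiv_right (m := 1) (by norm_num)).differentiable one_ne_zero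
  rw [gradient, gradient, ← map_sub, LinearIsometryEquiv.norm_map]
  exact convex_univ.norm_image_sub_le_of_norm_fderiv_le (fun z _ ↦ hdiff z)
    (fun z _ ↦ hHess.norm_fderiv_fderiv_le hL hmL hf z) (Set.mem_univ y) (Set.mem_univ x)

end Gradient

section Pathwise

theorem ofReal_norm_sq {E : Type*} [SeminormedAddGroup E] (y : E) :
    ENNReal.ofReal (‖y‖ ^ 2) = ‖y‖ₑ ^ 2 := by
  rw [ENNReal.ofReal_pow (norm_nonneg y), ofReal_norm]

theorem mul_integral_le_of_le_add_mul_integral {u a : ℝ → ℝ} {L h : ℝ} (hL : 0 ≤ L) (hh : 0 ≤ h)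
    (hu : IntervalIntegrable u volume 0 h) (ha : IntervalIntegrable a volume 0 h)
    (hu₀ : ∀ t, 0 ≤ u t)
    (hua : ∀ t ∈ Set.Icc 0 h, u t ≤ a t + L * ∫ s in 0..t, u s) :
    (1 - L * h) * ∫ t in 0..h, u t ≤ ∫ t in 0..h, a t := by
  have hu_le : ∀ t ∈ Set.Icc 0 h, u t ≤ a t + L * ∫ s in 0..h, u s := fun t ht ↦ by
    refine (hua t ht).trans ?_
    gcongr
    exact intervalIntegral.integral_mono_interval le_rfl ht.1 ht.2 (.of_forall hu₀) hu
  have := intervalIntegral.integral_mono_on hh hu (ha.add intervalIntegrable_const) hu_le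
  rw [intervalIntegral.integral_add ha intervalIntegrable_const, intervalIntegral.integral_const,
    smul_eq_mul] at this
  linarith

theorem sq_setAverage_le {α : Type*} [MeasurableSpace α] {μ : Measure α} {s : Set α}
    {g : α → ℝ} (hs₀ : μ s ≠ 0) (hs : μ s ≠ ∞) (hg : IntegrableOn g s μ)
    (hg_sq : IntegrableOn (fun a ↦ g a ^ 2) s μ) :
    (⨍ a in s, g a ∂μ) ^ 2 ≤ ⨍ a in s, g a ^ 2 ∂μ :=
  even_two.convexOn_pow.map_set_average_le (continuous_pow 2).continuousOn isClosed_univ hs₀ hs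
    (.of_forall fun _ ↦ Set.mem_univ _) hg hg_sq

/-- `x` solves the integral equation `x t = x 0 - ∫₀ᵗ b (x s) ds + w t`, that is
`dx = -b(x) dt + dw`, for a continuous forcing path `w`. -/
structure IsForcedPath {E : Type*} [NormedAddCommGroup E] [NormedSpace ℝ E] (b : E → E)
    (w x : ℝ → E) : Prop where
  continuous_forcing : Continuous w
  continuous : Continuous x
  eqn : ∀ t, 0 ≤ t → x t = x 0 - (∫ s in 0..t, b (x s)) + w t

namespace IsForcedPath

variable {E : Type*} [NormedAddCommGroup E] [NormedSpace ℝ E] {b : E → E} {w x : ℝ → E} {L h : ℝ}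

theorem norm_sub_le (hx : IsForcedPath b w x) (hb : Continuous b) (hL : 0 ≤ L)
    (hbL : ∀ y, ‖b y‖ ≤ L * ‖y‖) {t : ℝ} (ht : 0 ≤ t) :
    ‖x t - x 0‖ ≤ L * t * ‖x 0‖ + ‖w t‖ + L * ∫ s in 0..t, ‖x s - x 0‖ := by
  have hxc := hx.continuous
  have hdrift (s : ℝ) : ‖b (x s)‖ ≤ L * ‖x 0‖ + L * ‖x s - x 0‖ :=
    calc ‖b (x s)‖ ≤ L * ‖x s‖ := hbL _
      _ ≤ L * (‖x 0‖ + ‖x s - x 0‖) := by gcongr; exact norm_le_norm_add_norm_sub' _ _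
      _ = _ := mul_add _ _ _
  calc ‖x t - x 0‖ = ‖w t - ∫ s in 0..t, b (x s)‖ := by rw [hx.eqn t ht]; congr 1; abel
    _ ≤ ‖w t‖ + ∫ s in 0..t, ‖b (x s)‖ := by
        grw [_root_.norm_sub_le, intervalIntegral.norm_integral_le_integral_norm ht]
    _ ≤ ‖w t‖ + ∫ s in 0..t, (L * ‖x 0‖ + L * ‖x s - x 0‖) := by
        gcongr
        exact intervalIntegral.integral_mono ht ((hb.comp hxc).norm.intervalIntegrable _ _)
          (Continuous.intervalIntegrable (by fun_prop) _ _) hdrift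
    _ = _ := by
        rw [intervalIntegral.integral_add intervalIntegrable_const
          (Continuous.intervalIntegrable (by fun_prop) _ _), intervalIntegral.integral_const,
          intervalIntegral.integral_const_mul, smul_eq_mul]
        ring

theorem norm_sub_le_average (hx : IsForcedPath b w x) (hb : Continuous b) (hL : 0 ≤ L)
    (hbL : ∀ y, ‖b y‖ ≤ L * ‖y‖) (hh : 0 < h) (hLh : L * h ≤ 1 / 4) :
    ‖x h - x 0‖ ≤ 4 / 3 * (L * h * ‖x 0‖) + ‖w h‖ + 1 / 3 * ⨍ s in Set.Ioc 0 h, ‖w s‖ := by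
  have hxc := hx.continuous
  have hwc := hx.continuous_forcing
  set c := L * h * ‖x 0‖
  set I := ∫ s in 0..h, ‖x s - x 0‖
  set W := ⨍ s in Set.Ioc 0 h, ‖w s‖ with hW
  have hI₀ : 0 ≤ I := intervalIntegral.integral_nonneg hh.le fun _ _ ↦ norm_nonneg _
  have hW₀ : 0 ≤ W := integral_nonneg fun _ ↦ norm_nonneg _
  have average_eq : ∫ s in 0..h, (c + ‖w s‖) = h * (c + W) := by
    rw [intervalIntegral.integral_add intervalIntegrable_const
      (hwc.norm.intervalIntegrable _ _), intervalIntegral.integral_const,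
      intervalIntegral.integral_of_le hh.le, hW, setAverage_eq]
    simp [hh.le]
    field_simp
  have hI : (1 - L * h) * I ≤ h * (c + W) := by
    rw [← average_eq]
    refine mul_integral_le_of_le_add_mul_integral hL hh.le
      (Continuous.intervalIntegrable (by fun_prop) _ _)
      (Continuous.intervalIntegrable (by fun_prop) _ _) (fun _ ↦ norm_nonneg _) fun t ht ↦ ?_
    grw [hx.norm_sub_le hb hL hbL ht.1, ht.2]
  have hLI : L * I ≤ 1 / 3 * (c + W) := by
    have : 0 ≤ c + W := by positivity
    have : 0 ≤ L * I := by positivity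
    have absorbed : 3 / 4 * (L * I) ≤ 1 / 4 * (c + W) :=
      calc 3 / 4 * (L * I) ≤ (1 - L * h) * (L * I) := by gcongr; linarith
        _ = L * ((1 - L * h) * I) := by ring
        _ ≤ L * (h * (c + W)) := by gcongr
        _ = L * h * (c + W) := by ring
        _ ≤ 1 / 4 * (c + W) := by gcongr
    linarith
  linarith [hx.norm_sub_le hb hL hbL hh.le]

theorem norm_sub_sq_le (hx : IsForcedPath b w x) (hb : Continuous b) (hL : 0 ≤ L)
    (hbL : ∀ y, ‖b y‖ ≤ L * ‖y‖) (hh : 0 < h) (hLh : L * h ≤ 1 / 4) :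
    ‖x h - x 0‖ ^ 2 ≤ 16 / 3 * (L * h) ^ 2 * ‖x 0‖ ^ 2 + 2 * ‖w h‖ ^ 2 +
      2 / 3 * ⨍ s in Set.Ioc 0 h, ‖w s‖ ^ 2 := by
  have hwc := hx.continuous_forcing
  have jensen : (⨍ s in Set.Ioc 0 h, ‖w s‖) ^ 2 ≤ ⨍ s in Set.Ioc 0 h, ‖w s‖ ^ 2 :=
    sq_setAverage_le (by simp [hh]) (by simp) hwc.norm.integrableOn_Ioc
      (hwc.norm.pow 2).integrableOn_Ioc
  have weighted (p q r : ℝ) :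
      (4 / 3 * p + q + 1 / 3 * r) ^ 2 ≤ 16 / 3 * p ^ 2 + 2 * q ^ 2 + 2 / 3 * r ^ 2 := by
    -- Convexity of the square, with weights 1/3, 1/2, 1/6 on 4 p, 2 q, 2 r.
    nlinarith [sq_nonneg (8 / 3 * p - q - 1 / 3 * r), sq_nonneg (q - r)]
  calc ‖x h - x 0‖ ^ 2
      ≤ (4 / 3 * (L * h * ‖x 0‖) + ‖w h‖ + 1 / 3 * ⨍ s in Set.Ioc 0 h, ‖w s‖) ^ 2 := by
        grw [hx.norm_sub_le_average hb hL hbL hh hLh]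
    _ ≤ 16 / 3 * (L * h * ‖x 0‖) ^ 2 + 2 * ‖w h‖ ^ 2 +
          2 / 3 * (⨍ s in Set.Ioc 0 h, ‖w s‖) ^ 2 := weighted _ _ _
    _ ≤ _ := by grw [jensen, mul_pow, ← mul_assoc]

theorem enorm_sub_sq_le (hx : IsForcedPath b w x) (hb : Continuous b) (hL : 0 ≤ L)
    (hbL : ∀ y, ‖b y‖ ≤ L * ‖y‖) (hh : 0 < h) (hLh : L * h ≤ 1 / 4) :
    ‖x h - x 0‖ₑ ^ 2 ≤ ENNReal.ofReal (16 / 3 * (L * h) ^ 2) * ‖x 0‖ₑ ^ 2 +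
      2 * ‖w h‖ₑ ^ 2 + ENNReal.ofReal (2 / 3) * ⨍⁻ s in Set.Ioc 0 h, ‖w s‖ₑ ^ 2 ∂volume := by
  have hwc := hx.continuous_forcing
  have hsq : IntegrableOn (fun s ↦ ‖w s‖ ^ 2) (Set.Ioc 0 h) :=
    Continuous.integrableOn_Ioc (by fun_prop)
  have ofReal_mean_sq : ENNReal.ofReal (⨍ s in Set.Ioc 0 h, ‖w s‖ ^ 2) =
      ⨍⁻ s in Set.Ioc 0 h, ‖w s‖ₑ ^ 2 ∂volume := by
    rw [ofReal_setAverage hsq (.of_forall fun _ ↦ sq_nonneg _), setLAverage_eq]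
    simp_rw [ofReal_norm_sq]
  have hmean₀ : 0 ≤ ⨍ s in Set.Ioc 0 h, ‖w s‖ ^ 2 := integral_nonneg fun _ ↦ sq_nonneg _
  have := ENNReal.ofReal_le_ofReal (hx.norm_sub_sq_le hb hL hbL hh hLh)
  rw [ENNReal.ofReal_add (by positivity) (by positivity),
    ENNReal.ofReal_add (by positivity) (by positivity),
    ENNReal.ofReal_mul (p := 16 / 3 * (L * h) ^ 2) (by positivity),
    ENNReal.ofReal_mul (p := 2) zero_le_two, ENNReal.ofReal_mul (p := 2 / 3) (by norm_num)] at this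
  simpa only [ofReal_norm_sq, ofReal_mean_sq, ENNReal.ofReal_ofNat] using this

end IsForcedPath

end Pathwise

section MeanSquare

variable {Ω : Type*} {mΩ : MeasurableSpace Ω} {P : Measure Ω} [SFinite P]

theorem lintegral_setLAverage_le {α : Type*} [MeasurableSpace α] {ν : Measure α} [SFinite ν]
    {s : Set α} {F : α → Ω → ℝ≥0∞} {σ : ℝ≥0∞} (hs : MeasurableSet s)
    (hF : Measurable (Function.uncurry F)) (hσ : ∀ a ∈ s, ∫⁻ ω, F a ω ∂P ≤ σ) :
    ∫⁻ ω, ⨍⁻ a in s, F a ω ∂ν ∂P ≤ σ := by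
  have hF_swap : Measurable (Function.uncurry fun ω a ↦ F a ω) := hF.comp measurable_swap
  simp_rw [setLAverage_eq, div_eq_mul_inv]
  rw [lintegral_mul_const _ hF_swap.lintegral_prod_right,
    lintegral_lintegral_swap hF_swap.aemeasurable]
  calc (∫⁻ a in s, ∫⁻ ω, F a ω ∂P ∂ν) * (ν s)⁻¹
      ≤ (∫⁻ _ in s, σ ∂ν) * (ν s)⁻¹ := by grw [setLIntegral_mono' hs hσ]
    _ = σ * (ν s / ν s) := by rw [setLIntegral_const, mul_assoc, div_eq_mul_inv]
    _ ≤ σ := mul_le_of_le_one_right' ENNReal.div_self_le_one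

theorem lintegral_enorm_sub_sq_le_of_isForcedPath {E : Type*} [NormedAddCommGroup E]
    [NormedSpace ℝ E] [MeasurableSpace E] [OpensMeasurableSpace E] {b : E → E}
    {W X : ℝ → Ω → E} {L h : ℝ} {σ : ℝ≥0∞} (hX : ∀ ω, IsForcedPath b (W · ω) (X · ω))
    (hX₀ : Measurable (X 0)) (hW : ∀ t, Measurable (W t)) (hb : Continuous b) (hL : 0 ≤ L)
    (hbL : ∀ y, ‖b y‖ ≤ L * ‖y‖) (hh : 0 < h) (hLh : L * h ≤ 1 / 4)
    (hσ : ∀ t ∈ Set.Ioc 0 h, ∫⁻ ω, ‖W t ω‖ₑ ^ 2 ∂P ≤ σ) :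
    ∫⁻ ω, ‖X h ω - X 0 ω‖ₑ ^ 2 ∂P ≤
      ENNReal.ofReal (16 / 3 * (L * h) ^ 2) * ∫⁻ ω, ‖X 0 ω‖ₑ ^ 2 ∂P +
        ENNReal.ofReal (8 / 3) * σ := by
  have hW_uncurry : Measurable (Function.uncurry fun t ω ↦ ‖W t ω‖ₑ ^ 2) :=
    (measurable_uncurry_of_continuous_of_measurable (u := fun t ω ↦ ‖W t ω‖ₑ)
      (fun ω ↦ (hX ω).continuous_forcing.enorm) fun t ↦ (hW t).enorm).pow_const 2
  calc ∫⁻ ω, ‖X h ω - X 0 ω‖ₑ ^ 2 ∂P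
      ≤ ∫⁻ ω, (ENNReal.ofReal (16 / 3 * (L * h) ^ 2) * ‖X 0 ω‖ₑ ^ 2 + 2 * ‖W h ω‖ₑ ^ 2 +
          ENNReal.ofReal (2 / 3) * ⨍⁻ s in Set.Ioc 0 h, ‖W s ω‖ₑ ^ 2 ∂volume) ∂P :=
        lintegral_mono fun ω ↦ (hX ω).enorm_sub_sq_le hb hL hbL hh hLh
    _ = ENNReal.ofReal (16 / 3 * (L * h) ^ 2) * ∫⁻ ω, ‖X 0 ω‖ₑ ^ 2 ∂P +
          2 * ∫⁻ ω, ‖W h ω‖ₑ ^ 2 ∂P +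
          ENNReal.ofReal (2 / 3) * ∫⁻ ω, ⨍⁻ s in Set.Ioc 0 h, ‖W s ω‖ₑ ^ 2 ∂volume ∂P := by
        rw [lintegral_add_left (by fun_prop), lintegral_add_left (by fun_prop),
          lintegral_const_mul' _ _ ENNReal.ofReal_ne_top,
          lintegral_const_mul' _ _ ENNReal.ofNat_ne_top,
          lintegral_const_mul' _ _ ENNReal.ofReal_ne_top]
    _ ≤ ENNReal.ofReal (16 / 3 * (L * h) ^ 2) * ∫⁻ ω, ‖X 0 ω‖ₑ ^ 2 ∂P +
          2 * σ + ENNReal.ofReal (2 / 3) * σ := by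
        grw [hσ h ⟨hh, le_rfl⟩, lintegral_setLAverage_le measurableSet_Ioc hW_uncurry hσ]
    _ = _ := by
        rw [add_assoc, ← add_mul, ← ENNReal.ofReal_ofNat 2,
          ← ENNReal.ofReal_add zero_le_two (by norm_num)]
        norm_num

end MeanSquare

section BrownianMotion

theorem enorm_sqrt_sq {a : ℝ} (ha : 0 ≤ a) : ‖√a‖ₑ ^ 2 = ENNReal.ofReal a := by
  rw [← ofReal_norm_sq, norm_of_nonneg (sqrt_nonneg a), sq_sqrt ha]

theorem lintegral_enorm_sq_gaussianReal (v : ℝ≥0) : ∫⁻ x, ‖x‖ₑ ^ 2 ∂(gaussianReal 0 v) = v := by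
  simpa [evariance] using (ofReal_variance (memLp_id_gaussianReal (μ := 0) (v := v) 2)).symm

theorem lintegral_enorm_sq_stdGaussian (d : ℕ) :
    ∫⁻ x, ‖x‖ₑ ^ 2 ∂(_root_.stdGaussian d) = d := by
  have enorm_sq_eq_sum (x : Fin d → ℝ) :
      ‖(EuclideanSpace.equiv (Fin d) ℝ).symm x‖ₑ ^ 2 = ∑ i, ‖x i‖ₑ ^ 2 := by
    simp_rw [← ofReal_norm_sq, EuclideanSpace.real_norm_sq_eq,
      ENNReal.ofReal_sum_of_nonneg fun _ _ ↦ sq_nonneg _, Real.norm_eq_abs, sq_abs]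
    rfl
  have marginal (i : Fin d) :
      ∫⁻ x : Fin d → ℝ, ‖x i‖ₑ ^ 2 ∂(Measure.pi fun _ ↦ gaussianReal 0 1) = 1 := by
    rw [(measurePreserving_eval (fun _ : Fin d ↦ gaussianReal 0 1) i).lintegral_comp
      (f := fun x : ℝ ↦ ‖x‖ₑ ^ 2) (by fun_prop), lintegral_enorm_sq_gaussianReal,
      ENNReal.coe_one]
  rw [_root_.stdGaussian, lintegral_map (by fun_prop) (by fun_prop)]
  simp_rw [enorm_sq_eq_sum]
  rw [lintegral_finsetSum _ fun _ _ ↦ by fun_prop]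
  simp [marginal]

theorem lintegral_enorm_sq_isoGaussian (d : ℕ) {σ2 : ℝ} (hσ2 : 0 ≤ σ2) :
    ∫⁻ x, ‖x‖ₑ ^ 2 ∂(isoGaussian d σ2) = d * ENNReal.ofReal σ2 := by
  rw [isoGaussian, lintegral_map (by fun_prop) (by fun_prop)]
  simp_rw [enorm_smul, mul_pow, enorm_sqrt_sq hσ2]
  rw [lintegral_const_mul _ (by fun_prop), lintegral_enorm_sq_stdGaussian, mul_comm]

variable {d : ℕ} {Ω : Type*} {mΩ : MeasurableSpace Ω} {P : Measure Ω} {ℱ : Filtration ℝ mΩ}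
  {B : ℝ → Ω → Euc d}

theorem IsStdBrownian.measurable (hB : IsStdBrownian P ℱ B) (t : ℝ) : Measurable (B t) :=
  ((hB.adapted t).mono (ℱ.le t)).measurable

theorem IsStdBrownian.lintegral_enorm_sq (hB : IsStdBrownian P ℱ B) {t : ℝ} (ht : 0 ≤ t) :
    ∫⁻ ω, ‖B t ω‖ₑ ^ 2 ∂P = d * ENNReal.ofReal t := by
  have law : P.map (B t) = isoGaussian d t := by
    simpa [hB.init] using hB.incr_law 0 t le_rfl ht
  rw [← lintegral_enorm_sq_isoGaussian d ht, ← law, lintegral_map (by fun_prop) (hB.measurable t)]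

theorem IsStdBrownian.lintegral_enorm_sqrt_smul_sq (hB : IsStdBrownian P ℱ B) {a t : ℝ}
    (ha : 0 ≤ a) (ht : 0 ≤ t) :
    ∫⁻ ω, ‖√a • B t ω‖ₑ ^ 2 ∂P = ENNReal.ofReal (a * d * t) := by
  simp_rw [enorm_smul, mul_pow, enorm_sqrt_sq ha]
  rw [lintegral_const_mul' _ _ ENNReal.ofReal_ne_top, hB.lintegral_enorm_sq ht,
    ← ENNReal.ofReal_natCast, ← ENNReal.ofReal_mul d.cast_nonneg, ← ENNReal.ofReal_mul ha,
    mul_assoc]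

end BrownianMotion

section Langevin

variable {d : ℕ} {Ω : Type*} {mΩ : MeasurableSpace Ω} {P : Measure Ω} {ℱ : Filtration ℝ mΩ}
  {f : Euc d → ℝ} {B X : ℝ → Ω → Euc d}

theorem IsLangevinSolution.measurable (hX : IsLangevinSolution ℱ f B X) (t : ℝ) :
    Measurable (X t) :=
  ((hX.adapted t).mono (ℱ.le t)).measurable

theorem IsLangevinSolution.isForcedPath (hX : IsLangevinSolution ℱ f B X)
    (hB : IsStdBrownian P ℱ B) (ω : Ω) :
    IsForcedPath (gradient f) (fun t ↦ √2 • B t ω) (X · ω) where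
  continuous_forcing := (hB.cont ω).const_smul √2
  continuous := hX.cont ω
  eqn := hX.eqn ω

theorem sq_mul_le_of_le_one_div {m L h : ℝ} (hm : 0 < m) (hL : 0 < L)
    (hh : h ≤ 1 / (4 * (L / m) * L)) : L ^ 2 * h ≤ m / 4 := by
  rw [le_div_iff₀ (by positivity)] at hh
  field_simp at hh
  linarith

theorem langevin_growth_bound_general [IsProbabilityMeasure P] {L : ℝ} (hL : 0 ≤ L)
    (hf : ContDiff ℝ 1 f) (hgrad : ∀ x, ‖gradient f x‖ ≤ L * ‖x‖) (hB : IsStdBrownian P ℱ B)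
    (hX : IsLangevinSolution ℱ f B X) (hX0 : MemLp (X 0) 2 P)
    {h : ℝ} (hh : 0 ≤ h) (hLh : L * h ≤ 1 / 4) :
    ∫⁻ ω, ‖X h ω - X 0 ω‖ₑ ^ 2 ∂P ≤
      ENNReal.ofReal (6 * (d + L ^ 2 * h * ∫ ω, ‖X 0 ω‖ ^ 2 ∂P) * h) := by
  obtain rfl | hh := hh.eq_or_lt
  · simp
  have noise_le : ∀ t ∈ Set.Ioc 0 h,
      ∫⁻ ω, ‖√2 • B t ω‖ₑ ^ 2 ∂P ≤ ENNReal.ofReal (2 * d * h) := fun t ht ↦ by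
    grw [hB.lintegral_enorm_sqrt_smul_sq zero_le_two ht.1.le, ht.2]
  have initial_eq : ∫⁻ ω, ‖X 0 ω‖ₑ ^ 2 ∂P = ENNReal.ofReal (∫ ω, ‖X 0 ω‖ ^ 2 ∂P) := by
    simp_rw [← ofReal_norm_sq]
    exact (ofReal_integral_eq_lintegral_ofReal hX0.norm.integrable_sq
      (.of_forall fun _ ↦ by positivity)).symm
  calc ∫⁻ ω, ‖X h ω - X 0 ω‖ₑ ^ 2 ∂P
      ≤ ENNReal.ofReal (16 / 3 * (L * h) ^ 2) * ∫⁻ ω, ‖X 0 ω‖ₑ ^ 2 ∂P +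
          ENNReal.ofReal (8 / 3) * ENNReal.ofReal (2 * d * h) :=
        lintegral_enorm_sub_sq_le_of_isForcedPath (hX.isForcedPath hB) (hX.measurable 0)
          (fun t ↦ (hB.measurable t).const_smul √2) (continuous_gradient_of_contDiff hf) hL hgrad
          hh hLh noise_le
    _ = ENNReal.ofReal (16 / 3 * (L * h) ^ 2 * ∫ ω, ‖X 0 ω‖ ^ 2 ∂P + 16 / 3 * (d * h)) := by
        rw [initial_eq, ← ENNReal.ofReal_mul (by positivity), ← ENNReal.ofReal_mul (by positivity),
          ← ENNReal.ofReal_add (by positivity) (by positivity)]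
        ring_nf
    _ ≤ _ := by
        have : 0 ≤ ∫ ω, ‖X 0 ω‖ ^ 2 ∂P := integral_nonneg fun _ ↦ sq_nonneg _
        have : 0 ≤ d * h := by positivity
        have : 0 ≤ (L * h) ^ 2 * ∫ ω, ‖X 0 ω‖ ^ 2 ∂P := by positivity
        exact ENNReal.ofReal_le_ofReal (by linarith)

end Langevin

/-- **Growth bound of Langevin dynamics** (Lemma 3).
If `f` is `m`-strongly convex and `L`-smooth (`0 < m ≤ L`), `∇f(0) = 0`, and `X` solves the
overdamped Langevin dynamics with square-integrable initial value, then for every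
`0 ≤ h ≤ 1/(4κL)` (where `κ = L/m`): `E‖X_h - X_0‖² ≤ 6 (d + (m/2) E‖X_0‖²) h`. -/
theorem langevin_growth_bound
    {d : ℕ} {Ω : Type*} {mΩ : MeasurableSpace Ω} {P : Measure Ω} [IsProbabilityMeasure P]
    {ℱ : Filtration ℝ mΩ} {f : Euc d → ℝ} {m L : ℝ}
    (hm : 0 < m) (hmL : m ≤ L) (hf : ContDiff ℝ 2 f) (hHess : HessianBounds m L f)
    (hgrad0 : gradient f 0 = 0)
    {B X : ℝ → Ω → Euc d} (hB : IsStdBrownian P ℱ B)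
    (hX : IsLangevinSolution ℱ f B X) (hX0 : MemLp (X 0) 2 P)
    {h : ℝ} (hh0 : 0 ≤ h) (hh1 : h ≤ 1 / (4 * (L / m) * L)) :
    (∫⁻ ω, (‖X h ω - X 0 ω‖₊ : ℝ≥0∞) ^ 2 ∂P) ≤
      ENNReal.ofReal (6 * (d + m / 2 * ∫ ω, ‖X 0 ω‖ ^ 2 ∂P) * h) := by
  have hL : 0 < L := hm.trans_le hmL
  have hgrad (x : Euc d) : ‖gradient f x‖ ≤ L * ‖x‖ := by
    simpa [hgrad0] using hHess.norm_gradient_sub_le hL.le (by linarith) hf x 0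
  have hL2h : L ^ 2 * h ≤ m / 4 := sq_mul_le_of_le_one_div hm hL hh1
  have hLh : L * h ≤ 1 / 4 := by
    refine le_of_mul_le_mul_left ?_ hL
    linarith
  refine (langevin_growth_bound_general hL.le (hf.of_le one_le_two) hgrad hB hX hX0 hh0 hLh).trans
    (ENNReal.ofReal_le_ofReal ?_)
  gcongr
  linarith
end

section
/- (Local weak error of LMC, Lemma 6) Let f : ℝ^d → ℝ be three times continuously differentiable with m·I ≼ ∇²f(x) ≼ L·I for all x (0 < m ≤ L), κ = L/m, ∇f(0) = 0, and suppose ‖∇(Δf)(x)‖ ≤ G(1+‖x‖) for all x for some G > 0. Let (x_t) be a solution of the overdamped Langevin dynamics driven by a standard d-dimensional Brownian motion (B_t), with square-integrable initial value x, and let x̄₁ = x − h∇f(x) + √2·B_h be the one-step LMC update driven by the same Brownian increment. Then for every h with 0 ≤ h ≤ 1/(4κL): ‖E[x̄₁] − E[x_h]‖ ≤ 2(L² + G) (d/(4κL) + E‖x‖² + 1)^{1/2} · h². -/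
open MeasureTheory ProbabilityTheory Real
open scoped ENNReal NNReal

/-- The Laplacian of `f : ℝ^d → ℝ`, i.e. the trace of its Hessian, expressed via the
second iterated Fréchet derivative evaluated on the standard basis. -/
noncomputable def lapl {d : ℕ} (f : Euc d → ℝ) (x : Euc d) : ℝ :=
  ∑ i : Fin d,
    iteratedFDeriv ℝ 2 f x ![EuclideanSpace.single i (1:ℝ), EuclideanSpace.single i (1:ℝ)]

/-! Writing `X` for the solution, the error `E[x̄₁] - E[X_h]` is the integral over `[0, h]` of
`E[∇f(X_s) - ∇f(X_0)]`, so it suffices to bound the integrand by a multiple of `s`. Insert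
`Y_s = X_0 + √2 B_s`. Pathwise `X_s - Y_s` is an integral of the drift over `[0, s]`, so
`E‖∇f(X_s) - ∇f(Y_s)‖` is at most `L² s` times a first-moment bound for `X`. Since `B_s` is
independent of `X_0`, the remaining term `E[∇f(Y_s) - ∇f(X_0)]` is governed by the map
`τ ↦ E[∇f(x + τ Z)]` with `Z` standard Gaussian, evaluated at `τ = √(2s)`. Integration by parts
against the Gaussian density shows that its derivative is `τ E[Δ∇f(x + τ Z)]`, and `Δ∇f = ∇Δf`
grows at most linearly. This heat-equation argument takes the place of Itô's formula. -/

open Filter Topology Module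
open InnerProductSpace (toDual)
open scoped Laplacian Gradient

section Integrability

variable {Ω E F : Type*} {mΩ : MeasurableSpace Ω} {μ : Measure Ω}
  [NormedAddCommGroup E] [NormedAddCommGroup F]

lemma sq_integral_norm_le [IsProbabilityMeasure μ] {g : Ω → E} (hg : MemLp g 2 μ) :
    (∫ ω, ‖g ω‖ ∂μ) ^ 2 ≤ ∫ ω, ‖g ω‖ ^ 2 ∂μ := by
  have hvar := variance_nonneg (fun ω => ‖g ω‖) μ
  rwa [variance_eq_sub hg.norm, sub_nonneg] at hvar

lemma integrable_comp_of_lipschitzWith [IsFiniteMeasure μ] {φ : E → F} {C : ℝ≥0}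
    (hφ : LipschitzWith C φ) {Y : Ω → E} (hY : Integrable Y μ) :
    Integrable (fun ω => φ (Y ω)) μ := by
  have hcentred : Integrable (fun ω => φ (Y ω) - φ 0) μ :=
    memLp_one_iff_integrable.1 ((hφ.sub (.const (φ 0))).comp_memLp (sub_self _)
      (memLp_one_iff_integrable.2 hY))
  simpa only [Pi.add_def, sub_add_cancel] using hcentred.add (integrable_const (φ 0))

lemma hasDerivAt_integral_comp_add_smul [NormedSpace ℝ E] [NormedSpace ℝ F] [MeasurableSpace E]
    [BorelSpace E] [SecondCountableTopology E] {μ : Measure E} [IsFiniteMeasure μ] {φ : E → F}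
    (hφ : ContDiff ℝ 1 φ) {C : ℝ≥0} (hLip : LipschitzWith C φ)
    (hμ : Integrable (fun z => z) μ) (x : E) (τ : ℝ) :
    HasDerivAt (fun τ : ℝ => ∫ z, φ (x + τ • z) ∂μ) (∫ z, fderiv ℝ φ (x + τ • z) z ∂μ) τ := by
  have hDφ : Continuous (fderiv ℝ φ) := hφ.continuous_fderiv one_ne_zero
  refine (hasDerivAt_integral_of_dominated_loc_of_deriv_le
    (F := fun (τ : ℝ) z => φ (x + τ • z)) (F' := fun τ z => fderiv ℝ φ (x + τ • z) z)
    (bound := fun z => C * ‖z‖) univ_mem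
    (.of_forall fun τ => (hφ.continuous.comp (by fun_prop)).aestronglyMeasurable)
    (integrable_comp_of_lipschitzWith hLip ((integrable_const x).add (hμ.fun_smul τ)))
    ((hDφ.comp (by fun_prop)).clm_apply continuous_id).aestronglyMeasurable
    (.of_forall fun z τ _ => ?_) (hμ.norm.const_mul _) (.of_forall fun z τ _ => ?_)).2
  · exact ContinuousLinearMap.le_of_opNorm_le _ (norm_fderiv_le_of_lipschitz ℝ hLip) z
  · have hline : HasDerivAt (fun τ : ℝ => x + τ • z) z τ := by
      simpa only [one_smul] using ((hasDerivAt_id' τ).smul_const z).const_add x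
    exact (hφ.differentiable one_ne_zero _).hasFDerivAt.comp_hasDerivAt τ hline

end Integrability

section Divergence

variable {E F : Type*} [NormedAddCommGroup E] [NormedSpace ℝ E] [FiniteDimensional ℝ E]
  [NormedAddCommGroup F] [NormedSpace ℝ F]

variable (E) in
lemma exists_seq_contDiff_cutoff :
    ∃ (c : ℕ → E → ℝ) (ε : ℕ → ℝ),
      (∀ n, ContDiff ℝ 1 (c n)) ∧ (∀ n, HasCompactSupport (c n)) ∧ (∀ n x, |c n x| ≤ 1) ∧
      (∀ x, Tendsto (c · x) atTop (𝓝 1)) ∧ (∀ n x, ‖fderiv ℝ (c n) x‖ ≤ ε n) ∧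
      Tendsto ε atTop (𝓝 0) := by
  let χ : ContDiffBump (0 : E) := ⟨1, 2, one_pos, one_lt_two⟩
  have hχ : ContDiff ℝ 1 (χ : E → ℝ) := χ.contDiff
  obtain ⟨M, hM⟩ := (hχ.continuous_fderiv one_ne_zero).bounded_above_of_compact_support
    (χ.hasCompactSupport.fderiv ℝ)
  let r : ℕ → ℝ := fun n => 1 / ((n : ℝ) + 1)
  have hr : ∀ n, 0 < r n := fun n => Nat.one_div_pos_of_nat
  have hr_lim : Tendsto r atTop (𝓝 0) := tendsto_one_div_add_atTop_nhds_zero_nat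
  refine ⟨fun n x => χ (r n • x), fun n => r n * M,
    fun n => hχ.comp (contDiff_const_smul (r n)),
    fun n => χ.hasCompactSupport.comp_homeomorph (Homeomorph.smulOfNeZero (r n) (hr n).ne'),
    fun n x => (abs_of_nonneg χ.nonneg).trans_le χ.le_one, fun x => ?_, fun n x => ?_,
    by simpa only [zero_mul] using hr_lim.mul_const M⟩
  · have hχ0 : χ (0 : E) = 1 := χ.one_of_mem_closedBall (Metric.mem_closedBall_self zero_le_one)
    have harg : Tendsto (fun n => r n • x) atTop (𝓝 0) := by
      simpa only [zero_smul] using hr_lim.smul_const x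
    simpa only [hχ0, Function.comp_def] using (hχ.continuous.tendsto 0).comp harg
  · rw [fderiv_comp_smul, norm_smul, Real.norm_of_nonneg (hr n).le]
    exact mul_le_mul_of_nonneg_left (hM _) (hr n).le

variable [MeasurableSpace E] [BorelSpace E]

lemma integral_smul_sum_fderiv {ι : Type*} [Fintype ι] {μ : Measure E} [μ.IsAddHaarMeasure]
    {c : E → ℝ} {W : ι → E → F} {v : ι → E} (hc : ContDiff ℝ 1 c) (hc_supp : HasCompactSupport c)
    (hW : ∀ i, ContDiff ℝ 1 (W i)) :
    ∫ x, c x • ∑ i, fderiv ℝ (W i) x (v i) ∂μ = ∑ i, -∫ x, fderiv ℝ c x (v i) • W i x ∂μ := by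
  have hdc : ∀ i, Continuous fun x => fderiv ℝ c x (v i) := fun i =>
    (hc.continuous_fderiv one_ne_zero).clm_apply continuous_const
  have hdW : ∀ i, Continuous fun x => fderiv ℝ (W i) x (v i) := fun i =>
    ((hW i).continuous_fderiv one_ne_zero).clm_apply continuous_const
  have hc_dW : ∀ i, Integrable (fun x => c x • fderiv ℝ (W i) x (v i)) μ := fun i =>
    (hc.continuous.smul (hdW i)).integrable_of_hasCompactSupport hc_supp.smul_right
  simp only [Finset.smul_sum]
  rw [integral_finsetSum _ fun i _ => hc_dW i]
  refine Finset.sum_congr rfl fun i _ => integral_smul_fderiv_eq_neg_fderiv_smul_of_integrable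
    ?_ (hc_dW i) ?_ (fun x _ => hc.differentiable one_ne_zero x)
    fun x _ => (hW i).differentiable one_ne_zero x
  · exact ((hdc i).smul (hW i).continuous).integrable_of_hasCompactSupport
      (hc_supp.fderiv_apply ℝ (v i)).smul_right
  · exact (hc.continuous.smul (hW i).continuous).integrable_of_hasCompactSupport
      hc_supp.smul_right

lemma integral_sum_fderiv_eq_zero {ι : Type*} [Fintype ι] {μ : Measure E} [μ.IsAddHaarMeasure]
    {W : ι → E → F} {v : ι → E} (hW : ∀ i, ContDiff ℝ 1 (W i)) (hWi : ∀ i, Integrable (W i) μ)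
    (hdiv : Integrable (fun x => ∑ i, fderiv ℝ (W i) x (v i)) μ) :
    ∫ x, ∑ i, fderiv ℝ (W i) x (v i) ∂μ = 0 := by
  obtain ⟨c, ε, hc, hc_supp, hc_le, hc_lim, hε, hε_lim⟩ := exists_seq_contDiff_cutoff E
  have hlhs : Tendsto (fun n => ∫ x, c n x • ∑ i, fderiv ℝ (W i) x (v i) ∂μ) atTop
      (𝓝 (∫ x, ∑ i, fderiv ℝ (W i) x (v i) ∂μ)) := by
    refine tendsto_integral_of_dominated_convergence _
      (fun n => (hc n).continuous.aestronglyMeasurable.smul hdiv.1) hdiv.norm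
      (fun n => .of_forall fun x => ?_) (.of_forall fun x => ?_)
    · rw [norm_smul]
      exact mul_le_of_le_one_left (norm_nonneg _) (hc_le n x)
    · simpa only [one_smul] using (hc_lim x).smul_const (∑ i, fderiv ℝ (W i) x (v i))
  have hrhs : ∀ i, Tendsto (fun n => ∫ x, fderiv ℝ (c n) x (v i) • W i x ∂μ) atTop (𝓝 0) := by
    intro i
    have hbound : ∀ n x, ‖fderiv ℝ (c n) x (v i) • W i x‖ ≤ ε n * ‖v i‖ * ‖W i x‖ := fun n x => by
      rw [norm_smul]
      gcongr
      exact ContinuousLinearMap.le_of_opNorm_le _ (hε n x) _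
    refine squeeze_zero_norm (fun n => norm_integral_le_of_norm_le ((hWi i).norm.const_mul _)
      (.of_forall (hbound n))) ?_
    simp only [integral_const_mul]
    simpa only [zero_mul] using (hε_lim.mul_const ‖v i‖).mul_const (∫ x, ‖W i x‖ ∂μ)
  refine tendsto_nhds_unique hlhs ?_
  simp only [integral_smul_sum_fderiv (hc _) (hc_supp _) hW]
  simpa only [neg_zero, Finset.sum_const_zero] using
    tendsto_finsetSum Finset.univ fun i _ => (hrhs i).neg

end Divergence

section Gaussian

variable {E F : Type*} [NormedAddCommGroup E] [InnerProductSpace ℝ E]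
  [NormedAddCommGroup F] [NormedSpace ℝ F]

/-- The density of the standard Gaussian measure of a Euclidean space with respect to the
Lebesgue measure, with which Stein's identity becomes an integration by parts. -/
noncomputable def stdGaussianPDF (x : E) : ℝ :=
  ((2 * π) ^ ((finrank ℝ E : ℝ) / 2))⁻¹ * Real.exp (-(1 / 2) * ‖x‖ ^ 2)

lemma stdGaussianPDF_nonneg (x : E) : 0 ≤ stdGaussianPDF x := by
  unfold stdGaussianPDF
  positivity

lemma contDiff_stdGaussianPDF {n : WithTop ℕ∞} : ContDiff ℝ n (stdGaussianPDF (E := E)) :=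
  contDiff_const.mul (contDiff_const.mul (contDiff_norm_sq ℝ)).exp

lemma fderiv_stdGaussianPDF_apply (x v : E) :
    fderiv ℝ stdGaussianPDF x v = -inner ℝ x v * stdGaussianPDF x := by
  have h : HasFDerivAt (stdGaussianPDF (E := E)) _ x :=
    (((hasStrictFDerivAt_norm_sq x).hasFDerivAt.const_mul (-(1 / 2) : ℝ)).exp).const_mul _
  rw [h.fderiv]
  simp only [stdGaussianPDF, smul_apply, nsmul_eq_mul, smul_eq_mul, Nat.cast_ofNat,
    innerSL_apply_apply]
  ring

variable [FiniteDimensional ℝ E]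

lemma laplacian_eq_sum_fderiv_fderiv {ι : Type*} [Fintype ι] (b : OrthonormalBasis ι ℝ E)
    (φ : E → F) (x : E) : Δ φ x = ∑ i, fderiv ℝ (fderiv ℝ φ) x (b i) (b i) := by
  simp [InnerProductSpace.laplacian_eq_iteratedFDeriv_orthonormalBasis φ b,
    iteratedFDeriv_two_apply]

variable [MeasurableSpace E] [BorelSpace E]

lemma integrable_stdGaussianPDF : Integrable (stdGaussianPDF (E := E)) := by
  refine Integrable.const_mul ?_ _
  refine (GaussianFourier.integrable_cexp_neg_mul_sq_norm_add (b := (1 / 2 : ℂ)) (by norm_num) 0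
    (0 : E)).norm.congr (.of_forall fun x => ?_)
  simp [Complex.norm_exp, ← Complex.ofReal_pow]

lemma stdGaussian_eq_withDensity :
    ProbabilityTheory.stdGaussian E =
      volume.withDensity fun x => ENNReal.ofReal (stdGaussianPDF x) := by
  have := isFiniteMeasure_withDensity_ofReal (integrable_stdGaussianPDF (E := E)).2
  refine Measure.ext_of_charFun (funext fun t => ?_)
  have hfourier := GaussianFourier.integral_cexp_neg_mul_sq_norm_add (b := (1 / 2 : ℂ))
    (by norm_num) Complex.I t
  have hintegrand : ∀ x : E, (ENNReal.ofReal (stdGaussianPDF x)).toReal •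
      Complex.exp ((inner ℝ x t : ℝ) * Complex.I) =
      (((2 * π) ^ ((finrank ℝ E : ℝ) / 2))⁻¹ : ℝ) *
        Complex.exp (-(1 / 2) * ‖x‖ ^ 2 + Complex.I * (inner ℝ t x : ℝ)) := fun x => by
    rw [ENNReal.toReal_ofReal (stdGaussianPDF_nonneg x), Complex.exp_add, stdGaussianPDF,
      real_inner_comm, Complex.real_smul, mul_comm Complex.I]
    push_cast
    ring
  have hconst : (π / (1 / 2) : ℂ) ^ ((finrank ℝ E : ℂ) / 2) =
      (((2 * π) ^ ((finrank ℝ E : ℝ) / 2) : ℝ) : ℂ) := by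
    rw [Complex.ofReal_cpow (by positivity)]
    push_cast
    ring_nf
  rw [charFun_stdGaussian, charFun_apply, integral_withDensity_eq_integral_toReal_smul
    (contDiff_stdGaussianPDF (n := 0)).continuous.measurable.ennreal_ofReal (by simp)]
  simp_rw [hintegrand]
  rw [integral_const_mul, hfourier, hconst, ← mul_assoc, ← Complex.ofReal_mul,
    inv_mul_cancel₀ (by positivity), Complex.I_sq]
  push_cast
  ring_nf

lemma integral_stdGaussian (g : E → F) :
    ∫ x, g x ∂ProbabilityTheory.stdGaussian E = ∫ x, stdGaussianPDF x • g x := by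
  rw [stdGaussian_eq_withDensity, integral_withDensity_eq_integral_toReal_smul
    (contDiff_stdGaussianPDF (n := 0)).continuous.measurable.ennreal_ofReal (by simp)]
  simp only [ENNReal.toReal_ofReal (stdGaussianPDF_nonneg _)]

lemma integrable_stdGaussian_iff {g : E → F} :
    Integrable g (ProbabilityTheory.stdGaussian E) ↔
      Integrable fun x => stdGaussianPDF x • g x := by
  rw [stdGaussian_eq_withDensity, integrable_withDensity_iff_integrable_smul'
    (contDiff_stdGaussianPDF (n := 0)).continuous.measurable.ennreal_ofReal (by simp)]
  simp only [ENNReal.toReal_ofReal (stdGaussianPDF_nonneg _)]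

lemma integral_sum_inner_smul_stdGaussian {ι : Type*} [Fintype ι] {W : ι → E → F} {v : ι → E}
    (hW : ∀ i, ContDiff ℝ 1 (W i))
    (hWi : ∀ i, Integrable (W i) (ProbabilityTheory.stdGaussian E))
    (hinner : Integrable (fun z => ∑ i, inner ℝ z (v i) • W i z) (ProbabilityTheory.stdGaussian E))
    (hdiv : Integrable (fun z => ∑ i, fderiv ℝ (W i) z (v i)) (ProbabilityTheory.stdGaussian E)) :
    ∫ z, ∑ i, inner ℝ z (v i) • W i z ∂ProbabilityTheory.stdGaussian E =
      ∫ z, ∑ i, fderiv ℝ (W i) z (v i) ∂ProbabilityTheory.stdGaussian E := by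
  have hproduct : ∀ z, ∑ i, fderiv ℝ (fun x => stdGaussianPDF x • W i x) z (v i) =
      stdGaussianPDF z • ∑ i, fderiv ℝ (W i) z (v i) -
        stdGaussianPDF z • ∑ i, inner ℝ z (v i) • W i z := fun z => by
    rw [Finset.smul_sum, Finset.smul_sum, ← Finset.sum_sub_distrib]
    refine Finset.sum_congr rfl fun i _ => ?_
    rw [fderiv_fun_smul (contDiff_stdGaussianPDF.differentiable one_ne_zero z)
      ((hW i).differentiable one_ne_zero z)]
    simp only [add_apply, smul_apply, ContinuousLinearMap.smulRight_apply,
      fderiv_stdGaussianPDF_apply, smul_smul]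
    rw [neg_mul, neg_smul, mul_comm, sub_eq_add_neg]
  rw [integrable_stdGaussian_iff] at hinner hdiv
  have hzero := integral_sum_fderiv_eq_zero (μ := volume) (v := v)
    (W := fun i x => stdGaussianPDF x • W i x) (fun i => contDiff_stdGaussianPDF.smul (hW i))
    (fun i => integrable_stdGaussian_iff.1 (hWi i))
    (by simp only [hproduct]; exact hdiv.sub hinner)
  simp only [hproduct] at hzero
  rw [integral_sub hdiv hinner, sub_eq_zero] at hzero
  rw [integral_stdGaussian, integral_stdGaussian, hzero]

lemma integral_norm_sq_stdGaussian :
    ∫ z, ‖z‖ ^ 2 ∂ProbabilityTheory.stdGaussian E = finrank ℝ E := by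
  let b := stdOrthonormalBasis ℝ E
  have hcoord : ∀ i, ∫ z, inner ℝ (b i) z ^ 2 ∂ProbabilityTheory.stdGaussian E = 1 := fun i => by
    have hvar := variance_dual_stdGaussian (innerSL ℝ (b i))
    rw [variance_of_integral_eq_zero (by fun_prop) (integral_strongDual_stdGaussian _),
      innerSL_apply_norm, b.norm_eq_one, one_pow] at hvar
    exact hvar
  have hcoord_int : ∀ i, Integrable (fun z => inner ℝ (b i) z ^ 2)
      (ProbabilityTheory.stdGaussian E) := fun i =>
    (IsGaussian.memLp_two_id.const_inner (b i)).integrable_sq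
  simp only [← b.sum_sq_inner_right]
  rw [integral_finsetSum _ fun i _ => hcoord_int i]
  simp [hcoord]

lemma integrable_norm_stdGaussian :
    Integrable (fun z : E => ‖z‖) (ProbabilityTheory.stdGaussian E) :=
  IsGaussian.integrable_id.norm

lemma integral_norm_stdGaussian_le :
    ∫ z, ‖z‖ ∂ProbabilityTheory.stdGaussian E ≤ √(finrank ℝ E) := by
  rw [← integral_norm_sq_stdGaussian (E := E)]
  exact Real.le_sqrt_of_sq_le (sq_integral_norm_le IsGaussian.memLp_two_id)

lemma integral_fderiv_add_smul_stdGaussian {φ : E → F} (hφ : ContDiff ℝ 2 φ) {C : ℝ≥0}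
    (hLip : LipschitzWith C φ) {x : E} {τ : ℝ}
    (hΔ : Integrable (fun z => Δ φ (x + τ • z)) (ProbabilityTheory.stdGaussian E)) :
    ∫ z, fderiv ℝ φ (x + τ • z) z ∂ProbabilityTheory.stdGaussian E =
      τ • ∫ z, Δ φ (x + τ • z) ∂ProbabilityTheory.stdGaussian E := by
  let b := stdOrthonormalBasis ℝ E
  let W i z := fderiv ℝ φ (x + τ • z) (b i)
  have hDφ : ContDiff ℝ 1 (fderiv ℝ φ) := hφ.fderiv_right (by norm_num)
  have hline : ContDiff ℝ 1 fun z : E => x + τ • z := contDiff_const.add (contDiff_const_smul τ)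
  have hcomp : ContDiff ℝ 1 fun z => fderiv ℝ φ (x + τ • z) := hDφ.comp hline
  have hbound : ∀ z v, ‖fderiv ℝ φ (x + τ • z) v‖ ≤ C * ‖v‖ := fun z v =>
    ContinuousLinearMap.le_of_opNorm_le _ (norm_fderiv_le_of_lipschitz ℝ hLip) v
  have hfield : ∀ z, ∑ i, inner ℝ z (b i) • W i z = fderiv ℝ φ (x + τ • z) z := fun z => by
    simpa only [map_sum, map_smul, real_inner_comm] using
      congrArg (fderiv ℝ φ (x + τ • z)) (b.sum_repr' z)
  have hdiv : ∀ z, ∑ i, fderiv ℝ (W i) z (b i) = τ • Δ φ (x + τ • z) := fun z => by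
    rw [laplacian_eq_sum_fderiv_fderiv b, Finset.smul_sum]
    refine Finset.sum_congr rfl fun i _ => ?_
    have hinner : HasFDerivAt (fun z : E => x + τ • z) _ z :=
      ((hasFDerivAt_id (𝕜 := ℝ) z).const_smul τ).const_add x
    have houter := (hDφ.differentiable one_ne_zero (x + τ • z)).hasFDerivAt.comp z hinner
    have hWi : HasFDerivAt (W i) _ z := houter.clm_apply (hasFDerivAt_const (b i) z)
    rw [hWi.fderiv]
    simp
  have hstein := integral_sum_inner_smul_stdGaussian (W := W) (v := b)
    (fun i => hcomp.clm_apply contDiff_const)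
    (fun i => .of_bound (hcomp.clm_apply contDiff_const).continuous.aestronglyMeasurable _
      (.of_forall fun z => hbound z (b i)))
    (by
      simp only [hfield]
      exact (integrable_norm_stdGaussian.const_mul _).mono'
        (hcomp.continuous.clm_apply continuous_id).aestronglyMeasurable
        (.of_forall fun z => hbound z z))
    (by simpa only [hdiv] using hΔ.fun_smul τ)
  simpa only [hfield, hdiv, integral_smul] using hstein

lemma norm_integral_fderiv_add_smul_stdGaussian_le {φ : E → F} (hφ : ContDiff ℝ 2 φ) {C : ℝ≥0}
    (hLip : LipschitzWith C φ) {K : ℝ} (hΔ : ∀ y, ‖Δ φ y‖ ≤ K * (1 + ‖y‖)) (x : E) {τ : ℝ}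
    (hτ : 0 ≤ τ) :
    ‖∫ z, fderiv ℝ φ (x + τ • z) z ∂ProbabilityTheory.stdGaussian E‖ ≤
      τ * (K * (1 + ‖x‖ + τ * √(finrank ℝ E))) := by
  have hK : 0 ≤ K := by simpa using (norm_nonneg _).trans (hΔ 0)
  have hbound : ∀ z, ‖Δ φ (x + τ • z)‖ ≤ K * (1 + ‖x‖ + τ * ‖z‖) := fun z => by
    refine (hΔ _).trans (mul_le_mul_of_nonneg_left ?_ hK)
    rw [add_assoc]
    gcongr
    simpa only [norm_smul, Real.norm_of_nonneg hτ] using norm_add_le x (τ • z)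
  have hbound_int : Integrable (fun z : E => K * (1 + ‖x‖ + τ * ‖z‖))
      (ProbabilityTheory.stdGaussian E) :=
    ((integrable_const _).add (integrable_norm_stdGaussian.const_mul τ)).const_mul K
  have hΔ_cont : Continuous (Δ φ) := by
    rw [InnerProductSpace.laplacian_eq_iteratedFDeriv_stdOrthonormalBasis]
    have := hφ.continuous_iteratedFDeriv le_rfl
    fun_prop
  have hΔ_int : Integrable (fun z => Δ φ (x + τ • z)) (ProbabilityTheory.stdGaussian E) :=
    hbound_int.mono' (hΔ_cont.comp (by fun_prop)).aestronglyMeasurable (.of_forall hbound)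
  rw [integral_fderiv_add_smul_stdGaussian hφ hLip hΔ_int, norm_smul, Real.norm_of_nonneg hτ]
  refine mul_le_mul_of_nonneg_left ?_ hτ
  refine (norm_integral_le_of_norm_le hbound_int (.of_forall hbound)).trans ?_
  rw [integral_const_mul, integral_add (integrable_const _)
    (integrable_norm_stdGaussian.const_mul τ), integral_const_mul, integral_const, probReal_univ,
    one_smul]
  gcongr
  exact integral_norm_stdGaussian_le

lemma norm_integral_add_smul_stdGaussian_sub_le [CompleteSpace F] {φ : E → F}
    (hφ : ContDiff ℝ 2 φ) {C : ℝ≥0} (hLip : LipschitzWith C φ) {K : ℝ}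
    (hΔ : ∀ y, ‖Δ φ y‖ ≤ K * (1 + ‖y‖)) (x : E) {T : ℝ} (hT : 0 ≤ T) :
    ‖(∫ z, φ (x + T • z) ∂ProbabilityTheory.stdGaussian E) - φ x‖ ≤
      K * (1 + ‖x‖ + T * √(finrank ℝ E)) * (T ^ 2 / 2) := by
  have hK : 0 ≤ K := by simpa using (norm_nonneg _).trans (hΔ 0)
  set M := K * (1 + ‖x‖ + T * √(finrank ℝ E))
  have hderiv : ∀ τ, HasDerivAt
      (fun τ : ℝ => (∫ z, φ (x + τ • z) ∂ProbabilityTheory.stdGaussian E) - φ x)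
      (∫ z, fderiv ℝ φ (x + τ • z) z ∂ProbabilityTheory.stdGaussian E) τ := fun τ =>
    (hasDerivAt_integral_comp_add_smul (hφ.of_le one_le_two) hLip IsGaussian.integrable_id
      x τ).sub_const _
  have hbarrier : ∀ τ : ℝ, HasDerivAt (fun τ => M * (τ ^ 2 / 2)) (τ * M) τ := fun τ =>
    (((hasDerivAt_pow 2 τ).div_const 2).const_mul M).congr_deriv (by push_cast; ring)
  refine image_norm_le_of_norm_deriv_right_le_deriv_boundary (a := 0) (b := T)
    (fun τ _ => (hderiv τ).continuousAt.continuousWithinAt)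
    (fun τ _ => (hderiv τ).hasDerivWithinAt) (by simp) hbarrier
    (fun τ ⟨hτ, hτT⟩ => ?_) (Set.right_mem_Icc.2 hT)
  refine (norm_integral_fderiv_add_smul_stdGaussian_le hφ hLip hΔ x hτ).trans ?_
  simp only [M]
  gcongr

end Gaussian

section RandomShift

variable {Ω : Type*} {mΩ : MeasurableSpace Ω} {P : Measure Ω}

lemma norm_integral_le_of_indepFun {α β F : Type*} [MeasurableSpace α] [MeasurableSpace β]
    [NormedAddCommGroup F] [NormedSpace ℝ F] [IsFiniteMeasure P] {X : Ω → α} {Y : Ω → β}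
    {ν : Measure β} {g : α × β → F} {b : α → ℝ} (hX : AEMeasurable X P) (hY : HasLaw Y ν P)
    (hXY : X ⟂ᵢ[P] Y) (hg : StronglyMeasurable g) (hb : StronglyMeasurable b)
    (hg_int : Integrable (fun ω => g (X ω, Y ω)) P) (hb_int : Integrable (fun ω => b (X ω)) P)
    (hgb : ∀ x, ‖∫ y, g (x, y) ∂ν‖ ≤ b x) :
    ‖∫ ω, g (X ω, Y ω) ∂P‖ ≤ ∫ ω, b (X ω) ∂P := by
  have hlaw : HasLaw X (P.map X) P := ⟨hX, rfl⟩
  have : IsFiniteMeasure ν := hY.isFiniteMeasure_iff.1 inferInstance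
  have hpair := hXY.hasLaw_prod hlaw hY
  have hg_int' : Integrable g ((P.map X).prod ν) := by
    rw [← hpair.map_eq]
    exact (integrable_map_measure hg.aestronglyMeasurable hpair.aemeasurable).2 hg_int
  have hb_int' : Integrable b (P.map X) :=
    (integrable_map_measure hb.aestronglyMeasurable hX).2 hb_int
  calc ‖∫ ω, g (X ω, Y ω) ∂P‖ = ‖∫ x, ∫ y, g (x, y) ∂ν ∂P.map X‖ := by
        rw [← integral_prod _ hg_int', ← hpair.integral_comp hg.aestronglyMeasurable,
          Function.comp_def]
    _ ≤ ∫ x, b x ∂P.map X := norm_integral_le_of_norm_le hb_int' (.of_forall hgb)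
    _ = ∫ ω, b (X ω) ∂P := integral_map hX hb.aestronglyMeasurable

variable {E F : Type*} [NormedAddCommGroup E] [InnerProductSpace ℝ E] [FiniteDimensional ℝ E]
  [MeasurableSpace E] [BorelSpace E] [NormedAddCommGroup F] [NormedSpace ℝ F] [CompleteSpace F]
  {W : Ω → E} {T : ℝ}

lemma integrable_of_hasLaw_smul_stdGaussian
    (hW : HasLaw W ((ProbabilityTheory.stdGaussian E).map (T • ·)) P) : Integrable W P := by
  have h : Integrable (fun w : E => w) (P.map W) := by
    rw [hW.map_eq, integrable_map_measure (by fun_prop) (by fun_prop)]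
    exact IsGaussian.integrable_id.fun_smul T
  exact h.comp_aemeasurable hW.aemeasurable

lemma integral_norm_le_of_hasLaw_smul_stdGaussian (hT : 0 ≤ T)
    (hW : HasLaw W ((ProbabilityTheory.stdGaussian E).map (T • ·)) P) :
    ∫ ω, ‖W ω‖ ∂P ≤ T * √(finrank ℝ E) := by
  have hlaw : ∫ ω, ‖W ω‖ ∂P = ∫ w, ‖w‖ ∂(ProbabilityTheory.stdGaussian E).map (T • ·) :=
    hW.integral_comp (f := norm) (by fun_prop)
  rw [hlaw, integral_map (by fun_prop) (by fun_prop)]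
  simp only [norm_smul, Real.norm_of_nonneg hT]
  rw [integral_const_mul]
  exact mul_le_mul_of_nonneg_left integral_norm_stdGaussian_le hT

lemma norm_integral_comp_add_sub_le [IsProbabilityMeasure P] {φ : E → F} (hφ : ContDiff ℝ 2 φ)
    {C : ℝ≥0} (hLip : LipschitzWith C φ) {K : ℝ} (hΔ : ∀ y, ‖Δ φ y‖ ≤ K * (1 + ‖y‖)) {Y : Ω → E}
    (hY : Integrable Y P) (hT : 0 ≤ T)
    (hW : HasLaw W ((ProbabilityTheory.stdGaussian E).map (T • ·)) P) (hYW : Y ⟂ᵢ[P] W) :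
    ‖∫ ω, (φ (Y ω + W ω) - φ (Y ω)) ∂P‖ ≤
      K * (1 + ∫ ω, ‖Y ω‖ ∂P + T * √(finrank ℝ E)) * (T ^ 2 / 2) := by
  have hφ_cont : Continuous φ := hφ.continuous
  have hshift : ∀ x, ‖∫ w, (φ (x + w) - φ x) ∂(ProbabilityTheory.stdGaussian E).map (T • ·)‖ ≤
      K * (1 + ‖x‖ + T * √(finrank ℝ E)) * (T ^ 2 / 2) := fun x => by
    have hint : Integrable (fun z => φ (x + T • z)) (ProbabilityTheory.stdGaussian E) :=
      integrable_comp_of_lipschitzWith hLip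
        ((integrable_const x).add (IsGaussian.integrable_id.fun_smul T))
    rw [integral_map (by fun_prop) (by fun_prop), integral_sub hint (integrable_const _),
      integral_const, probReal_univ, one_smul]
    exact norm_integral_add_smul_stdGaussian_sub_le hφ hLip hΔ x hT
  have hW_int := integrable_of_hasLaw_smul_stdGaussian hW
  have hsum_int : Integrable (fun ω => 1 + ‖Y ω‖) P := (integrable_const 1).add hY.norm
  refine (norm_integral_le_of_indepFun (g := fun p => φ (p.1 + p.2) - φ p.1) hY.aemeasurable hW
    hYW (Continuous.stronglyMeasurable (by fun_prop)) (Continuous.stronglyMeasurable (by fun_prop))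
    ((integrable_comp_of_lipschitzWith hLip (hY.add hW_int)).sub
      (integrable_comp_of_lipschitzWith hLip hY))
    (((hsum_int.add (integrable_const _)).const_mul _).mul_const _) hshift).trans_eq ?_
  rw [integral_mul_const, integral_const_mul, integral_add hsum_int (integrable_const _),
    integral_add (integrable_const _) hY.norm]
  simp

end RandomShift

section Gradient

lemma lapl_eq_laplacian {d : ℕ} (f : Euc d → ℝ) : lapl f = Δ f := by
  ext x
  simp [lapl, InnerProductSpace.laplacian_eq_iteratedFDeriv_orthonormalBasis f
    (EuclideanSpace.basisFun (Fin d) ℝ)]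

section NormedSpace

variable {E F : Type*} [NormedAddCommGroup E] [NormedSpace ℝ E] [NormedAddCommGroup F]
  [NormedSpace ℝ F] {φ : E → F}

lemma fderiv_fderiv_comm (hφ : ContDiff ℝ 2 φ) (x v w : E) :
    fderiv ℝ (fderiv ℝ φ) x v w = fderiv ℝ (fderiv ℝ φ) x w v :=
  (hφ.contDiffAt.isSymmSndFDerivAt (by simp)).eq v w

lemma hasFDerivAt_fderiv_fderiv_apply (hφ : ContDiff ℝ 3 φ) (x v w : E) :
    HasFDerivAt (fun y => fderiv ℝ (fderiv ℝ φ) y v w)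
      (((fderiv ℝ (fderiv ℝ (fderiv ℝ φ)) x).flip v).flip w) x := by
  have hDDφ : ContDiff ℝ 1 (fderiv ℝ (fderiv ℝ φ)) :=
    (hφ.fderiv_right (m := 2) (by norm_num)).fderiv_right (by norm_num)
  refine (((hDDφ.differentiable one_ne_zero x).hasFDerivAt.clm_apply
    (hasFDerivAt_const v x)).clm_apply (hasFDerivAt_const w x)).congr_fderiv ?_
  ext u
  simp

lemma fderiv_fderiv_fderiv_comm (hφ : ContDiff ℝ 3 φ) (x u v w : E) :
    fderiv ℝ (fderiv ℝ (fderiv ℝ φ)) x u v w = fderiv ℝ (fderiv ℝ (fderiv ℝ φ)) x u w v := by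
  have hvw := hasFDerivAt_fderiv_fderiv_apply hφ x v w
  simp only [fderiv_fderiv_comm (hφ.of_le (by norm_num)) _ v w] at hvw
  exact DFunLike.congr_fun (hvw.unique (hasFDerivAt_fderiv_fderiv_apply hφ x w v)) u

end NormedSpace

variable {E F : Type*} [NormedAddCommGroup E] [InnerProductSpace ℝ E]

lemma contDiff_gradient [CompleteSpace E] {φ : E → ℝ} {n : WithTop ℕ∞}
    (hφ : ContDiff ℝ (n + 1) φ) : ContDiff ℝ n (∇ φ) :=
  (toDual ℝ E).symm.contDiff.comp (hφ.fderiv_right le_rfl)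

variable [FiniteDimensional ℝ E] [NormedAddCommGroup F] [NormedSpace ℝ F]

lemma laplacian_fderiv {φ : E → F} (hφ : ContDiff ℝ 3 φ) : Δ (fderiv ℝ φ) = fderiv ℝ (Δ φ) := by
  ext x v
  let b := stdOrthonormalBasis ℝ E
  have hDφ : ContDiff ℝ 2 (fderiv ℝ φ) := hφ.fderiv_right (by norm_num)
  have hΔ := HasFDerivAt.fun_sum (u := Finset.univ) fun i _ =>
    hasFDerivAt_fderiv_fderiv_apply hφ x (b i) (b i)
  simp only [← laplacian_eq_sum_fderiv_fderiv] at hΔ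
  rw [hΔ.fderiv, laplacian_eq_sum_fderiv_fderiv b]
  simp [fderiv_fderiv_comm hDφ x v, fderiv_fderiv_fderiv_comm hφ x _ v]

lemma norm_laplacian_gradient [CompleteSpace E] {φ : E → ℝ} (hφ : ContDiff ℝ 3 φ) (x : E) :
    ‖Δ (∇ φ) x‖ = ‖∇ (Δ φ) x‖ := by
  have hcomp : Δ (∇ φ) = (toDual ℝ E).symm ∘ Δ (fderiv ℝ φ) :=
    InnerProductSpace.laplacian_CLE_comp_left (l := (toDual ℝ E).symm.toContinuousLinearEquiv)
  rw [hcomp, laplacian_fderiv hφ]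
  rfl

end Gradient

section Hessian

variable {d : ℕ} {f : Euc d → ℝ} {m : ℝ} {L : ℝ≥0}

lemma inner_fderiv_gradient (hf : ContDiff ℝ 2 f) (x v w : Euc d) :
    inner ℝ (fderiv ℝ (∇ f) x v) w = fderiv ℝ (fderiv ℝ f) x v w := by
  have hDf : DifferentiableAt ℝ (fderiv ℝ f) x :=
    (hf.fderiv_right (m := 1) (by norm_num)).differentiable one_ne_zero x
  have hgrad : DifferentiableAt ℝ (∇ f) x :=
    (contDiff_gradient (n := 1) (by simpa [one_add_one_eq_two] using hf)).differentiable
      one_ne_zero x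
  calc inner ℝ (fderiv ℝ (∇ f) x v) w = fderiv ℝ (fun y => inner ℝ (∇ f y) w) x v := by
        rw [fderiv_inner_apply ℝ hgrad (differentiableAt_const w)]
        simp
    _ = fderiv ℝ (fun y => fderiv ℝ f y w) x v := by simp only [inner_gradient_left]
    _ = fderiv ℝ (fderiv ℝ f) x v w := by
        simp [fderiv_clm_apply hDf (differentiableAt_const w)]

lemma HessianBounds.lipschitzWith_gradient (hHess : HessianBounds m L f) (hmL : -L ≤ m)
    (hf : ContDiff ℝ 2 f) : LipschitzWith L (∇ f) := by
  have hgrad : ContDiff ℝ 1 (∇ f) := contDiff_gradient (by simpa [one_add_one_eq_two] using hf)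
  refine lipschitzWith_of_nnnorm_fderiv_le (hgrad.differentiable one_ne_zero) fun x => ?_
  have hsymm : (fderiv ℝ (∇ f) x).IsSymmetric := fun v w => by
    change inner ℝ (fderiv ℝ (∇ f) x v) w = inner ℝ v (fderiv ℝ (∇ f) x w)
    rw [real_inner_comm _ v, inner_fderiv_gradient hf, inner_fderiv_gradient hf,
      fderiv_fderiv_comm hf]
  have hrayleigh : ∀ v, |(fderiv ℝ (∇ f) x).rayleighQuotient v| ≤ L := fun v => by
    have hquad := hHess x v
    simp only [iteratedFDeriv_two_apply, Matrix.cons_val_zero, Matrix.cons_val_one] at hquad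
    change |inner ℝ (fderiv ℝ (∇ f) x v) v / ‖v‖ ^ 2| ≤ L
    rw [inner_fderiv_gradient hf, abs_div, abs_of_nonneg (sq_nonneg ‖v‖)]
    exact div_le_of_le_mul₀ (sq_nonneg _) L.2 (abs_le.2 ⟨by nlinarith [sq_nonneg ‖v‖], hquad.2⟩)
  rw [← NNReal.coe_le_coe, coe_nnnorm, ContinuousLinearMap.norm_eq_iSup_rayleighQuotient _ hsymm]
  exact ciSup_le hrayleigh

end Hessian

section Paths

variable {E : Type*} [NormedAddCommGroup E] [NormedSpace ℝ E] {x w : ℝ → E} {g : E → E} {L h : ℝ}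

lemma norm_le_of_eq_sub_integral_add (hx : Continuous x) (hw : Continuous w) (hL : 0 ≤ L)
    (hg : ∀ y, ‖g y‖ ≤ L * ‖y‖)
    (heq : ∀ t, 0 ≤ t → x t = x 0 - (∫ s in (0 : ℝ)..t, g (x s)) + w t) (hLh : L * h < 1)
    {r : ℝ} (hr : 0 ≤ r) (hrh : r ≤ h) :
    ‖x r‖ ≤ (‖x 0‖ + L * ∫ s in (0 : ℝ)..h, ‖w s‖) / (1 - L * h) + ‖w r‖ := by
  obtain ⟨t, ⟨ht, hth⟩, hmax⟩ := isCompact_Icc.exists_isMaxOn (s := Set.Icc 0 h)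
    ⟨r, hr, hrh⟩ (hx.sub hw).norm.continuousOn
  set M := ‖x t - w t‖
  have hsplit : ∀ s ∈ Set.Icc 0 h, ‖x s‖ ≤ M + ‖w s‖ := fun s hs =>
    (norm_le_norm_sub_add (x s) (w s)).trans (by gcongr; exact hmax hs)
  have hcont : Continuous fun s => L * (M + ‖w s‖) := by fun_prop
  have hdrift : ‖∫ s in (0 : ℝ)..t, g (x s)‖ ≤ L * (h * M + ∫ s in (0 : ℝ)..h, ‖w s‖) :=
    calc ‖∫ s in (0 : ℝ)..t, g (x s)‖ ≤ ∫ s in (0 : ℝ)..t, L * (M + ‖w s‖) := by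
          refine intervalIntegral.norm_integral_le_of_norm_le ht (.of_forall fun s hs => ?_)
            (hcont.intervalIntegrable _ _)
          exact (hg _).trans (mul_le_mul_of_nonneg_left (hsplit s ⟨hs.1.le, hs.2.trans hth⟩) hL)
      _ ≤ ∫ s in (0 : ℝ)..h, L * (M + ‖w s‖) :=
          intervalIntegral.integral_mono_interval le_rfl ht hth
            (.of_forall fun s => by positivity) (hcont.intervalIntegrable _ _)
      _ = L * (h * M + ∫ s in (0 : ℝ)..h, ‖w s‖) := by
          rw [intervalIntegral.integral_const_mul, intervalIntegral.integral_add (by simp)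
            (hw.norm.intervalIntegrable _ _), intervalIntegral.integral_const, sub_zero,
            smul_eq_mul]
  have hM : M ≤ ‖x 0‖ + L * (h * M + ∫ s in (0 : ℝ)..h, ‖w s‖) := by
    have hxt : x t - w t = x 0 - ∫ s in (0 : ℝ)..t, g (x s) := by
      rw [heq t ht, add_sub_cancel_right]
    refine (congrArg norm hxt).trans_le ((norm_sub_le _ _).trans ?_)
    gcongr
  refine (hsplit r ⟨hr, hrh⟩).trans (add_le_add_left ?_ _)
  rw [le_div_iff₀ (sub_pos.2 hLh)]
  linarith

end Paths

section Fubini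

variable {Ω E : Type*} {mΩ : MeasurableSpace Ω} {P : Measure Ω} [SFinite P]
  [NormedAddCommGroup E] {u : ℝ → Ω → E} {a b M : ℝ}

lemma integrable_uncurry_of_integral_norm_le (hcont : ∀ ω, Continuous (u · ω))
    (hmeas : ∀ s, StronglyMeasurable (u s)) (hint : ∀ s ∈ Set.Ioc a b, Integrable (u s) P)
    (hM : ∀ s ∈ Set.Ioc a b, ∫ ω, ‖u s ω‖ ∂P ≤ M) :
    Integrable (Function.uncurry u) ((volume.restrict (Set.Ioc a b)).prod P) := by
  have hjoint : StronglyMeasurable (Function.uncurry u) :=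
    stronglyMeasurable_uncurry_of_continuous_of_stronglyMeasurable hcont hmeas
  refine (integrable_prod_iff hjoint.aestronglyMeasurable).2
    ⟨ae_restrict_of_forall_mem measurableSet_Ioc hint, ?_⟩
  refine .of_bound hjoint.norm.integral_prod_right.aestronglyMeasurable M
    (ae_restrict_of_forall_mem measurableSet_Ioc fun s hs => ?_)
  rw [Real.norm_of_nonneg (integral_nonneg fun ω => norm_nonneg _)]
  exact hM s hs

lemma integrable_intervalIntegral [NormedSpace ℝ E] (hab : a ≤ b)
    (hu : Integrable (Function.uncurry u) ((volume.restrict (Set.Ioc a b)).prod P)) :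
    Integrable (fun ω => ∫ s in a..b, u s ω) P := by
  simp only [intervalIntegral.integral_of_le hab]
  exact hu.integral_prod_right

lemma integral_intervalIntegral_norm_le (hab : a ≤ b)
    (hu : Integrable (Function.uncurry u) ((volume.restrict (Set.Ioc a b)).prod P))
    (hM : ∀ s ∈ Set.Ioc a b, ∫ ω, ‖u s ω‖ ∂P ≤ M) :
    ∫ ω, (∫ s in a..b, ‖u s ω‖) ∂P ≤ (b - a) * M := by
  rw [← Set.uIoc_of_le hab] at hu hM
  rw [← intervalIntegral_integral_swap hu.norm, mul_comm, ← abs_of_nonneg (sub_nonneg.2 hab)]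
  refine (Real.le_norm_self _).trans
    (intervalIntegral.norm_integral_le_of_norm_le_const fun s hs => ?_)
  rw [Real.norm_of_nonneg (integral_nonneg fun ω => norm_nonneg _)]
  exact hM s hs

end Fubini

section Brownian

variable {d : ℕ} {Ω : Type*} {mΩ : MeasurableSpace Ω} {P : Measure Ω} {ℱ : Filtration ℝ mΩ}
  {B : ℝ → Ω → Euc d}

lemma stdGaussian_eq_probabilityTheory_stdGaussian :
    _root_.stdGaussian d = ProbabilityTheory.stdGaussian (Euc d) :=
  map_pi_eq_stdGaussian

namespace IsStdBrownian

lemma stronglyMeasurable (hB : IsStdBrownian P ℱ B) (s : ℝ) : StronglyMeasurable (B s) :=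
  (hB.adapted s).mono (ℱ.le s)

lemma hasLaw_sqrt_two_smul (hB : IsStdBrownian P ℱ B) {s : ℝ} (hs : 0 ≤ s) :
    HasLaw (fun ω => √2 • B s ω)
      ((ProbabilityTheory.stdGaussian (Euc d)).map (√(2 * s) • ·)) P where
  aemeasurable := ((hB.stronglyMeasurable s).const_smul √2).aestronglyMeasurable.aemeasurable
  map_eq := by
    have hlaw : P.map (B s) = (ProbabilityTheory.stdGaussian (Euc d)).map (√s • ·) := by
      simpa [hB.init, isoGaussian, stdGaussian_eq_probabilityTheory_stdGaussian]
        using hB.incr_law 0 s le_rfl hs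
    have hcomp := Measure.map_map (μ := P) (f := B s) (g := fun v => √2 • v) (by fun_prop)
      (hB.stronglyMeasurable s).measurable
    rw [hlaw, Measure.map_map (by fun_prop) (by fun_prop)] at hcomp
    simpa [Function.comp_def, smul_smul] using hcomp.symm

lemma integrable_sqrt_two_smul (hB : IsStdBrownian P ℱ B) {s : ℝ} (hs : 0 ≤ s) :
    Integrable (fun ω => √2 • B s ω) P :=
  integrable_of_hasLaw_smul_stdGaussian (hB.hasLaw_sqrt_two_smul hs)

lemma integral_norm_sqrt_two_smul_le (hB : IsStdBrownian P ℱ B) {s h : ℝ} (hs : 0 ≤ s)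
    (hsh : s ≤ h) : ∫ ω, ‖√2 • B s ω‖ ∂P ≤ √(2 * h) * √d := by
  refine (integral_norm_le_of_hasLaw_smul_stdGaussian (Real.sqrt_nonneg _)
    (hB.hasLaw_sqrt_two_smul hs)).trans ?_
  rw [finrank_euclideanSpace_fin]
  gcongr

lemma integrable_uncurry_sqrt_two_smul [SFinite P] (hB : IsStdBrownian P ℱ B) (h : ℝ) :
    Integrable (Function.uncurry fun s ω => √2 • B s ω)
      ((volume.restrict (Set.Ioc 0 h)).prod P) :=
  integrable_uncurry_of_integral_norm_le (fun ω => (hB.cont ω).const_smul √2)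
    (fun s => (hB.stronglyMeasurable s).const_smul √2)
    (fun _ hs => hB.integrable_sqrt_two_smul hs.1.le)
    (fun _ hs => hB.integral_norm_sqrt_two_smul_le hs.1.le hs.2)

lemma indepFun_sqrt_two_smul (hB : IsStdBrownian P ℱ B) {Y : Ω → Euc d}
    (hY : StronglyMeasurable[ℱ 0] Y) {s : ℝ} (hs : 0 ≤ s) : Y ⟂ᵢ[P] fun ω => √2 • B s ω := by
  have hindep : Indep (MeasurableSpace.comap (B s) inferInstance) (ℱ 0) P := by
    simpa only [hB.init, sub_zero] using hB.incr_indep 0 s le_rfl hs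
  have hYB : Y ⟂ᵢ[P] B s :=
    indep_of_indep_of_le_left hindep.symm hY.measurable.comap_le
  exact hYB.comp measurable_id (measurable_const_smul √2)

lemma norm_integral_gradient_add_sqrt_two_smul_sub_le [IsProbabilityMeasure P]
    (hB : IsStdBrownian P ℱ B) {f : Euc d → ℝ} (hf : ContDiff ℝ 3 f) {L : ℝ≥0}
    (hLip : LipschitzWith L (∇ f)) {G : ℝ} (hlapl : ∀ y, ‖∇ (Δ f) y‖ ≤ G * (1 + ‖y‖))
    {Y : Ω → Euc d} (hY : StronglyMeasurable[ℱ 0] Y) (hY_int : Integrable Y P) {s : ℝ}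
    (hs : 0 ≤ s) :
    ‖∫ ω, (∇ f (Y ω + √2 • B s ω) - ∇ f (Y ω)) ∂P‖ ≤
      G * (1 + ∫ ω, ‖Y ω‖ ∂P + √(2 * s) * √d) * s := by
  have h := norm_integral_comp_add_sub_le (contDiff_gradient (n := 2) (hf.of_le (by norm_num))) hLip
    (fun y => (norm_laplacian_gradient hf y).trans_le (hlapl y)) hY_int (Real.sqrt_nonneg (2 * s))
    (hB.hasLaw_sqrt_two_smul hs) (hB.indepFun_sqrt_two_smul hY hs)
  rwa [finrank_euclideanSpace_fin, Real.sq_sqrt (by positivity), mul_div_cancel_left₀ s two_ne_zero]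
    at h

end IsStdBrownian

end Brownian

section Langevin

variable {d : ℕ} {Ω : Type*} {mΩ : MeasurableSpace Ω} {P : Measure Ω} {ℱ : Filtration ℝ mΩ}
  {f : Euc d → ℝ} {L : ℝ≥0} {B X : ℝ → Ω → Euc d} {h s : ℝ}

namespace IsLangevinSolution

lemma stronglyMeasurable (hX : IsLangevinSolution ℱ f B X) (s : ℝ) : StronglyMeasurable (X s) :=
  (hX.adapted s).mono (ℱ.le s)

lemma norm_le (hX : IsLangevinSolution ℱ f B X) (hB : IsStdBrownian P ℱ B)
    (hLip : LipschitzWith L (∇ f)) (hcrit : ∇ f 0 = 0) (hLh : L * h < 1) (hs : 0 ≤ s)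
    (hsh : s ≤ h) (ω : Ω) :
    ‖X s ω‖ ≤ (‖X 0 ω‖ + L * ∫ r in (0 : ℝ)..h, ‖√2 • B r ω‖) / (1 - L * h) + ‖√2 • B s ω‖ :=
  norm_le_of_eq_sub_integral_add (hX.cont ω) ((hB.cont ω).const_smul √2) L.2
    (hLip.norm_le_mul hcrit) (hX.eqn ω) hLh hs hsh

variable [IsProbabilityMeasure P] (hX : IsLangevinSolution ℱ f B X) (hB : IsStdBrownian P ℱ B)
  (hLip : LipschitzWith L (∇ f)) (hcrit : ∇ f 0 = 0) (hX0 : Integrable (X 0) P) (hLh : L * h < 1)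
include hX hB hLip hcrit hX0 hLh

lemma integrable (hs : 0 ≤ s) (hsh : s ≤ h) : Integrable (X s) P :=
  (((hX0.norm.add ((integrable_intervalIntegral (hs.trans hsh)
    (hB.integrable_uncurry_sqrt_two_smul h).norm).const_mul (L : ℝ))).div_const _).add
    (hB.integrable_sqrt_two_smul hs).norm).mono' (hX.stronglyMeasurable s).aestronglyMeasurable
    (.of_forall (hX.norm_le hB hLip hcrit hLh hs hsh))

lemma integral_norm_le (hs : 0 ≤ s) (hsh : s ≤ h) :
    ∫ ω, ‖X s ω‖ ∂P ≤ (∫ ω, ‖X 0 ω‖ ∂P + √(2 * h) * √d) / (1 - L * h) := by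
  have hnoise := hB.integrable_uncurry_sqrt_two_smul h
  have hnoise_le : ∫ ω, (∫ r in (0 : ℝ)..h, ‖√2 • B r ω‖) ∂P ≤ h * (√(2 * h) * √d) := by
    simpa only [sub_zero] using integral_intervalIntegral_norm_le (hs.trans hsh) hnoise
      fun r hr => hB.integral_norm_sqrt_two_smul_le hr.1.le hr.2
  have hBs := (hB.integrable_sqrt_two_smul hs).norm
  have hdrift := (integrable_intervalIntegral (hs.trans hsh) (u := fun r ω => ‖√2 • B r ω‖)
    hnoise.norm).const_mul (L : ℝ)
  have hsum : Integrable
      (fun ω => (‖X 0 ω‖ + L * ∫ r in (0 : ℝ)..h, ‖√2 • B r ω‖) / (1 - L * h)) P :=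
    (hX0.norm.add hdrift).div_const _
  have hpos : 0 < 1 - L * h := sub_pos.2 hLh
  calc ∫ ω, ‖X s ω‖ ∂P
      ≤ ∫ ω, ((‖X 0 ω‖ + L * ∫ r in (0 : ℝ)..h, ‖√2 • B r ω‖) / (1 - L * h) + ‖√2 • B s ω‖) ∂P :=
        integral_mono (hX.integrable hB hLip hcrit hX0 hLh hs hsh).norm (hsum.add hBs)
          (hX.norm_le hB hLip hcrit hLh hs hsh)
    _ = (∫ ω, ‖X 0 ω‖ ∂P + L * ∫ ω, (∫ r in (0 : ℝ)..h, ‖√2 • B r ω‖) ∂P) / (1 - L * h) +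
          ∫ ω, ‖√2 • B s ω‖ ∂P := by
        rw [integral_add hsum hBs, integral_div, integral_add hX0.norm hdrift, integral_const_mul]
    _ ≤ (∫ ω, ‖X 0 ω‖ ∂P + L * (h * (√(2 * h) * √d))) / (1 - L * h) + √(2 * h) * √d := by
        gcongr
        exact hB.integral_norm_sqrt_two_smul_le hs hsh
    _ = (∫ ω, ‖X 0 ω‖ ∂P + √(2 * h) * √d) / (1 - L * h) := by
        field_simp
        ring

lemma integrable_uncurry (hsh : s ≤ h) :
    Integrable (Function.uncurry X) ((volume.restrict (Set.Ioc 0 s)).prod P) :=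
  integrable_uncurry_of_integral_norm_le hX.cont hX.stronglyMeasurable
    (fun _ hr => hX.integrable hB hLip hcrit hX0 hLh hr.1.le (hr.2.trans hsh))
    (fun _ hr => hX.integral_norm_le hB hLip hcrit hX0 hLh hr.1.le (hr.2.trans hsh))

lemma integral_norm_gradient_sub_gradient_add_le (hs : 0 ≤ s) (hsh : s ≤ h) :
    ∫ ω, ‖∇ f (X s ω) - ∇ f (X 0 ω + √2 • B s ω)‖ ∂P ≤
      L ^ 2 * (s * ((∫ ω, ‖X 0 ω‖ ∂P + √(2 * h) * √d) / (1 - L * h))) := by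
  have hX_int := hX.integrable_uncurry hB hLip hcrit hX0 hLh hsh
  have hpath : ∀ ω, ‖∇ f (X s ω) - ∇ f (X 0 ω + √2 • B s ω)‖ ≤
      L ^ 2 * ∫ r in (0 : ℝ)..s, ‖X r ω‖ := fun ω => by
    have hdrift : X s ω - (X 0 ω + √2 • B s ω) = -∫ r in (0 : ℝ)..s, ∇ f (X r ω) := by
      rw [hX.eqn ω s hs]
      abel
    calc ‖∇ f (X s ω) - ∇ f (X 0 ω + √2 • B s ω)‖
        ≤ L * ‖X s ω - (X 0 ω + √2 • B s ω)‖ := hLip.norm_sub_le _ _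
      _ = L * ‖∫ r in (0 : ℝ)..s, ∇ f (X r ω)‖ := by rw [hdrift, norm_neg]
      _ ≤ L * ∫ r in (0 : ℝ)..s, L * ‖X r ω‖ := by
          gcongr
          exact intervalIntegral.norm_integral_le_of_norm_le hs
            (.of_forall fun r _ => hLip.norm_le_mul hcrit _)
            (((hX.cont ω).norm.const_mul _).intervalIntegrable _ _)
      _ = L ^ 2 * ∫ r in (0 : ℝ)..s, ‖X r ω‖ := by
          rw [intervalIntegral.integral_const_mul]
          ring
  refine (integral_mono_of_nonneg (.of_forall fun _ => norm_nonneg _)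
    ((integrable_intervalIntegral hs hX_int.norm).const_mul _) (.of_forall hpath)).trans ?_
  rw [integral_const_mul]
  gcongr
  simpa only [sub_zero] using integral_intervalIntegral_norm_le hs hX_int
    fun r hr => hX.integral_norm_le hB hLip hcrit hX0 hLh hr.1.le (hr.2.trans hsh)

lemma integral_euler_sub_eq_integral (hh : 0 ≤ h) :
    (∫ ω, (X 0 ω - h • ∇ f (X 0 ω) + √2 • B h ω) ∂P) - ∫ ω, X h ω ∂P =
      ∫ s in (0 : ℝ)..h, ∫ ω, (∇ f (X s ω) - ∇ f (X 0 ω)) ∂P := by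
  have hgrad0 := integrable_comp_of_lipschitzWith hLip hX0
  have hgrad : Integrable (Function.uncurry fun s ω => ∇ f (X s ω) - ∇ f (X 0 ω))
      ((volume.restrict (Set.Ioc 0 h)).prod P) :=
    (integrable_comp_of_lipschitzWith hLip
      (hX.integrable_uncurry hB hLip hcrit hX0 hLh le_rfl)).sub (hgrad0.comp_snd _)
  have herror : ∀ ω, X 0 ω - h • ∇ f (X 0 ω) + √2 • B h ω - X h ω =
      ∫ s in (0 : ℝ)..h, (∇ f (X s ω) - ∇ f (X 0 ω)) := fun ω => by
    have hpath : Continuous fun s => ∇ f (X s ω) := hLip.continuous.comp (hX.cont ω)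
    rw [hX.eqn ω h hh, intervalIntegral.integral_sub (hpath.intervalIntegrable _ _) (by simp),
      intervalIntegral.integral_const, sub_zero]
    abel
  have heuler : Integrable (fun ω => X 0 ω - h • ∇ f (X 0 ω) + √2 • B h ω) P :=
    (hX0.sub (hgrad0.fun_smul h)).add (hB.integrable_sqrt_two_smul hh)
  rw [← integral_sub heuler (hX.integrable hB hLip hcrit hX0 hLh hh le_rfl)]
  simp only [herror]
  rw [← Set.uIoc_of_le hh] at hgrad
  exact (intervalIntegral_integral_swap hgrad).symm

lemma norm_integral_gradient_sub_le (hf : ContDiff ℝ 3 f) {G : ℝ}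
    (hlapl : ∀ y, ‖∇ (Δ f) y‖ ≤ G * (1 + ‖y‖)) (hs : 0 ≤ s) (hsh : s ≤ h) :
    ‖∫ ω, (∇ f (X s ω) - ∇ f (X 0 ω)) ∂P‖ ≤
      (L ^ 2 + G) * ((1 + ∫ ω, ‖X 0 ω‖ ∂P + √(2 * h) * √d) / (1 - L * h)) * s := by
  set A := 1 + ∫ ω, ‖X 0 ω‖ ∂P + √(2 * h) * √d
  have hG : 0 ≤ G := by simpa using (norm_nonneg _).trans (hlapl 0)
  have hA : 0 ≤ A := by positivity
  have hpos : 0 < 1 - L * h := sub_pos.2 hLh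
  have hLh0 : 0 ≤ L * h := mul_nonneg L.2 (hs.trans hsh)
  have hgradX := integrable_comp_of_lipschitzWith hLip
    (hX.integrable hB hLip hcrit hX0 hLh hs hsh)
  have hgradX0 := integrable_comp_of_lipschitzWith hLip hX0
  have hgradY := integrable_comp_of_lipschitzWith hLip
    (hX0.fun_add (hB.integrable_sqrt_two_smul hs))
  have hdrift : ‖∫ ω, (∇ f (X s ω) - ∇ f (X 0 ω + √2 • B s ω)) ∂P‖ ≤
      L ^ 2 * (A / (1 - L * h)) * s := by
    refine (norm_integral_le_integral_norm _).trans
      ((hX.integral_norm_gradient_sub_gradient_add_le hB hLip hcrit hX0 hLh hs hsh).trans ?_)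
    rw [mul_assoc, mul_comm s]
    gcongr
    linarith
  have hnoise : ‖∫ ω, (∇ f (X 0 ω + √2 • B s ω) - ∇ f (X 0 ω)) ∂P‖ ≤
      G * (A / (1 - L * h)) * s := by
    refine (hB.norm_integral_gradient_add_sqrt_two_smul_sub_le hf hLip hlapl
      (hX.adapted 0) hX0 hs).trans ?_
    have hAs : 1 + ∫ ω, ‖X 0 ω‖ ∂P + √(2 * s) * √d ≤ A := by
      unfold A
      gcongr
    gcongr
    exact hAs.trans (le_div_self hA hpos (by linarith))
  have hsplit := integral_add (hgradX.sub hgradY) (hgradY.sub hgradX0)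
  simp only [Pi.sub_apply, sub_add_sub_cancel] at hsplit
  calc ‖∫ ω, (∇ f (X s ω) - ∇ f (X 0 ω)) ∂P‖
      = ‖∫ ω, (∇ f (X s ω) - ∇ f (X 0 ω + √2 • B s ω)) ∂P +
          ∫ ω, (∇ f (X 0 ω + √2 • B s ω) - ∇ f (X 0 ω)) ∂P‖ :=
        congrArg norm hsplit
    _ ≤ L ^ 2 * (A / (1 - L * h)) * s + G * (A / (1 - L * h)) * s :=
        norm_add_le_of_le hdrift hnoise
    _ = (L ^ 2 + G) * (A / (1 - L * h)) * s := by ring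

lemma norm_integral_euler_sub_le (hf : ContDiff ℝ 3 f) {G : ℝ}
    (hlapl : ∀ y, ‖∇ (Δ f) y‖ ≤ G * (1 + ‖y‖)) (hh : 0 ≤ h) :
    ‖(∫ ω, (X 0 ω - h • ∇ f (X 0 ω) + √2 • B h ω) ∂P) - ∫ ω, X h ω ∂P‖ ≤
      (L ^ 2 + G) * ((1 + ∫ ω, ‖X 0 ω‖ ∂P + √(2 * h) * √d) / (1 - L * h)) * (h ^ 2 / 2) := by
  rw [hX.integral_euler_sub_eq_integral hB hLip hcrit hX0 hLh hh]
  refine (intervalIntegral.norm_integral_le_of_norm_le hh (.of_forall fun s hs =>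
    hX.norm_integral_gradient_sub_le hB hLip hcrit hX0 hLh hf hlapl hs.1.le hs.2)
    ((continuous_const_mul _).intervalIntegrable _ _)).trans_eq ?_
  rw [intervalIntegral.integral_const_mul, integral_id]
  simp

end IsLangevinSolution

end Langevin

section StepSize

lemma one_add_add_sqrt_mul_le {e S a b : ℝ} (he : e ^ 2 ≤ S) (ha : 0 ≤ a) (hb : 0 ≤ b) :
    1 + e + √(2 * a) * √b ≤ 2 * √(a * b + S + 1) := by
  have hq : (√(2 * a) * √b) ^ 2 = 2 * (a * b) := by
    rw [mul_pow, Real.sq_sqrt (by positivity), Real.sq_sqrt hb, mul_assoc]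
  have hr : √(a * b + S + 1) ^ 2 = a * b + S + 1 :=
    Real.sq_sqrt (by linarith [mul_nonneg ha hb, sq_nonneg e])
  set q := √(2 * a) * √b
  refine le_of_sq_le_sq ?_ (by positivity)
  nlinarith [sq_nonneg (1 - e), sq_nonneg (q - (1 + e))]

lemma mul_le_one_div_four_of_le_one_div {m L h : ℝ} (hm : 0 < m) (hmL : m ≤ L)
    (hh : h ≤ 1 / (4 * (L / m) * L)) : L * h ≤ 1 / 4 := by
  have hL : 0 < L := hm.trans_le hmL
  calc L * h ≤ L * (1 / (4 * (L / m) * L)) := by gcongr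
    _ = m / L / 4 := by field_simp
    _ ≤ 1 / 4 := by
        gcongr
        exact div_le_one_of_le₀ hmL hL.le

end StepSize

theorem lmc_local_weak_error_general {d : ℕ} {Ω : Type*} {mΩ : MeasurableSpace Ω} {P : Measure Ω}
    [IsProbabilityMeasure P] {ℱ : Filtration ℝ mΩ} {f : Euc d → ℝ} {L : ℝ≥0} {G : ℝ}
    (hf : ContDiff ℝ 3 f) (hLip : LipschitzWith L (∇ f)) (hgrad0 : ∇ f 0 = 0)
    (hlapl : ∀ x : Euc d, ‖∇ (lapl f) x‖ ≤ G * (1 + ‖x‖))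
    {B X : ℝ → Ω → Euc d} (hB : IsStdBrownian P ℱ B) (hX : IsLangevinSolution ℱ f B X)
    (hX0 : MemLp (X 0) 2 P) {h : ℝ} (hh : 0 ≤ h) (hLh : L * h ≤ 1 / 4) :
    ‖(∫ ω, (X 0 ω - h • ∇ f (X 0 ω) + √2 • B h ω) ∂P) - (∫ ω, X h ω ∂P)‖ ≤
      2 * (L ^ 2 + G) * √(h * d + (∫ ω, ‖X 0 ω‖ ^ 2 ∂P) + 1) * h ^ 2 := by
  have hG : 0 ≤ G := by simpa using (norm_nonneg _).trans (hlapl 0)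
  rw [lapl_eq_laplacian] at hlapl
  set R := √(h * d + (∫ ω, ‖X 0 ω‖ ^ 2 ∂P) + 1)
  have hmoment : 1 + ∫ ω, ‖X 0 ω‖ ∂P + √(2 * h) * √d ≤ 2 * R :=
    one_add_add_sqrt_mul_le (sq_integral_norm_le hX0) hh d.cast_nonneg
  calc ‖(∫ ω, (X 0 ω - h • ∇ f (X 0 ω) + √2 • B h ω) ∂P) - (∫ ω, X h ω ∂P)‖
      ≤ (L ^ 2 + G) * ((1 + ∫ ω, ‖X 0 ω‖ ∂P + √(2 * h) * √d) / (1 - L * h)) * (h ^ 2 / 2) :=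
        hX.norm_integral_euler_sub_le hB hLip hgrad0 (hX0.integrable one_le_two)
          (hLh.trans_lt (by norm_num)) hf hlapl hh
    _ ≤ (L ^ 2 + G) * (2 * R / (1 / 2)) * (h ^ 2 / 2) := by
        gcongr
        linarith
    _ = 2 * (L ^ 2 + G) * R * h ^ 2 := by ring

/-- **Local weak error of LMC** (Lemma 6).
If `f ∈ C³` is `m`-strongly convex and `L`-smooth (`0 < m ≤ L`), `∇f(0) = 0`,
`‖∇(Δf)(x)‖ ≤ G(1 + ‖x‖)` for all `x` (with `G > 0`), `X` solves the overdamped Langevin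
dynamics with square-integrable initial value `x = X_0`, and
`x̄₁ = x - h ∇f(x) + √2 B_h` is the one-step LMC update driven by the same Brownian increment,
then for every `0 ≤ h ≤ 1/(4κL)` (where `κ = L/m`):
`‖E[x̄₁] - E[X_h]‖ ≤ 2 (L² + G) (d/(4κL) + E‖x‖² + 1)^{1/2} h²`. -/
theorem lmc_local_weak_error
    {d : ℕ} {Ω : Type*} {mΩ : MeasurableSpace Ω} {P : Measure Ω} [IsProbabilityMeasure P]
    {ℱ : Filtration ℝ mΩ} {f : Euc d → ℝ} {m L G : ℝ}
    (hm : 0 < m) (hmL : m ≤ L) (hf : ContDiff ℝ 3 f) (hHess : HessianBounds m L f)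
    (hgrad0 : gradient f 0 = 0) (hG : 0 < G)
    (hlapl : ∀ x : Euc d, ‖gradient (lapl f) x‖ ≤ G * (1 + ‖x‖))
    {B X : ℝ → Ω → Euc d} (hB : IsStdBrownian P ℱ B)
    (hX : IsLangevinSolution ℱ f B X) (hX0 : MemLp (X 0) 2 P)
    {h : ℝ} (hh0 : 0 ≤ h) (hh1 : h ≤ 1 / (4 * (L / m) * L)) :
    ‖(∫ ω, (X 0 ω - h • gradient f (X 0 ω) + Real.sqrt 2 • B h ω) ∂P) - (∫ ω, X h ω ∂P)‖ ≤
      2 * (L ^ 2 + G) *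
        Real.sqrt (d / (4 * (L / m) * L) + (∫ ω, ‖X 0 ω‖ ^ 2 ∂P) + 1) * h ^ 2 := by
  lift L to ℝ≥0 using (hm.trans_le hmL).le
  have hLip := hHess.lipschitzWith_gradient (by linarith [L.coe_nonneg]) (hf.of_le (by norm_num))
  refine (lmc_local_weak_error_general hf hLip hgrad0 hlapl hB hX hX0 hh0
    (mul_le_one_div_four_of_le_one_div hm hmL hh1)).trans ?_
  gcongr
  exact (mul_le_mul_of_nonneg_right hh1 d.cast_nonneg).trans_eq (one_div_mul_eq_div _ _)
end
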